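/- (Achievability of the reliability function.) For any discrete memoryless channel W: X → Y on finite alphabets: for 0 ≤ r < I_∞(W), the reliability function satisfies E_rf^{(1+s)}(W,r) ≥ sup_{t≥0} t(r − I_{1+t}(W)) when s ∈ (−1,0], and E_rf^{(1+s)}(W,r) ≥ max{ sup_{t≥s} t(r − I_{1+t}(W)), 0 } when s ∈ (0,∞]; moreover, for r ≥ I_∞(W), E_rf^{(1+s)}(W,r) = ∞ for all s ∈ (0,∞]. -/

import Mathlib

open scoped ENNReal NNReal BigOperators Classical
open Filter

noncomputable section

namespace RST

/-- Base-2 logarithm `ℝ≥0∞ → EReal`, with `log 0 = ⊥` and `log ⊤ = ⊤`. -/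
def elog2 (s : ℝ≥0∞) : EReal :=
  if s = 0 then ⊥ else if s = ⊤ then ⊤ else ((Real.logb 2 s.toReal : ℝ) : EReal)

/-- Base-2 logarithm `EReal → EReal` (for nonnegative arguments). -/
def eLog2 (x : EReal) : EReal :=
  if x = ⊤ then ⊤ else if x ≤ 0 then ⊥ else ((Real.logb 2 x.toReal : ℝ) : EReal)

/-- Base-2 exponential `EReal → ℝ≥0∞`. -/
def epow2 (x : EReal) : ℝ≥0∞ :=
  if x = ⊤ then ⊤ else if x = ⊥ then 0 else ENNReal.ofReal ((2 : ℝ) ^ x.toReal)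

variable {X Y : Type*}

/-- A probability distribution on a finite alphabet, as an `ℝ≥0∞`-valued function. -/
def IsDist [Fintype X] (P : X → ℝ≥0∞) : Prop := ∑ x, P x = 1

/-- A discrete memoryless channel: every row is a probability distribution. -/
def IsChannel [Fintype X] [Fintype Y] (W : X → Y → ℝ≥0∞) : Prop := ∀ x, ∑ y, W x y = 1

/-- Order-`α` Rényi divergence (base 2), with the order `α ∈ [0,∞]` encoded as `ℝ≥0∞`.
The conventions `0/0 = 0` and `a/0 = ∞` (for `a > 0`, `α > 1`) are built into `ℝ≥0∞`
arithmetic.  The second argument is allowed to be an arbitrary nonnegative vector. -/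
def renyiD [Fintype X] (α : ℝ≥0∞) (P Q : X → ℝ≥0∞) : EReal :=
  if α = 0 then - elog2 (∑ x ∈ Finset.univ.filter fun x => P x ≠ 0, Q x)
  else if α = 1 then ∑ x, ((P x).toReal : EReal) * elog2 (P x / Q x)
  else if α = ⊤ then elog2 (⨆ x, P x / Q x)
  else (((α.toReal - 1)⁻¹ : ℝ) : EReal) *
    elog2 (∑ x, P x ^ α.toReal * Q x ^ (1 - α.toReal))

/-- The `X`-marginal of a joint distribution on `X × Y`. -/
def margX [Fintype X] [Fintype Y] (P : X × Y → ℝ≥0∞) : X → ℝ≥0∞ := fun x => ∑ y, P (x, y)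

/-- Order-`α` Rényi mutual information `I_α(X:Y)_P = min_{Q_Y} D_α(P‖P_X × Q_Y)`. -/
def renyiMI [Fintype X] [Fintype Y] (α : ℝ≥0∞) (P : X × Y → ℝ≥0∞) : EReal :=
  ⨅ Q : {Q : Y → ℝ≥0∞ // IsDist Q}, renyiD α P fun p => margX P p.1 * Q.1 p.2

/-- The joint input-output distribution `P_X · W`. -/
def joint [Fintype X] [Fintype Y] (PX : X → ℝ≥0∞) (W : X → Y → ℝ≥0∞) : X × Y → ℝ≥0∞ :=
  fun p => PX p.1 * W p.1 p.2

/-- Order-`α` Rényi capacity `I_α(W) = max_{P_X} I_α(X:Y)_{P_X · W}`. -/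
def renyiCap [Fintype X] [Fintype Y] (α : ℝ≥0∞) (W : X → Y → ℝ≥0∞) : EReal :=
  ⨆ P : {P : X → ℝ≥0∞ // IsDist P}, renyiMI α (joint P.1 W)

/-- `N` is a simulation of a channel `X → Y` with communication cost at most `c` bits:
shared randomness `K = Fin m` with distribution `PK`, a message set `{1,…,M}` with
`log₂ M ≤ c`, an encoder `E` and a decoder `D`. -/
def IsSimulation [Fintype X] [Fintype Y] (c : ℝ) (N : X → Y → ℝ≥0∞) : Prop :=
  ∃ (m M : ℕ) (PK : Fin m → ℝ≥0∞) (E : X → Fin m → Fin M → ℝ≥0∞)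
    (D : Fin M → Fin m → Y → ℝ≥0∞),
    0 < M ∧ Real.logb 2 M ≤ c ∧ (∑ k, PK k = 1) ∧
    (∀ x k, ∑ j, E x k j = 1) ∧ (∀ j k, ∑ y, D j k y = 1) ∧
    ∀ x y, N x y = ∑ k, ∑ j, PK k * E x k j * D j k y

/-- `D_α(W, N) := max_x D_α(W(·|x) ‖ N(·|x))`. -/
def chD [Fintype X] [Fintype Y] (α : ℝ≥0∞) (W N : X → Y → ℝ≥0∞) : EReal :=
  ⨆ x, renyiD α (W x) (N x)

/-- `𝖣_α(W, c) := min_{N ∈ A(W,c)} D_α(W, N)`. -/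
def simD [Fintype X] [Fintype Y] (α : ℝ≥0∞) (W : X → Y → ℝ≥0∞) (c : ℝ) : EReal :=
  ⨅ N : {N : X → Y → ℝ≥0∞ // IsSimulation c N}, chD α W N.1

/-- The `n`-fold memoryless extension `W^{×n}` of a channel `W`. -/
def prodCh [Fintype X] [Fintype Y] (n : ℕ) (W : X → Y → ℝ≥0∞) :
    (Fin n → X) → (Fin n → Y) → ℝ≥0∞ :=
  fun xs ys => ∏ i, W (xs i) (ys i)

/-- A sequence of communication costs with rate at most `r`. -/
def RateOK (r : ℝ) (c : ℕ → ℝ) : Prop :=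
  (∀ n, 0 ≤ c n) ∧ Filter.limsup (fun n : ℕ => ((c n / n : ℝ) : EReal)) Filter.atTop ≤ (r : EReal)

/-- Reliability function `E_rf^{(α)}(W, r)`. -/
def Erf [Fintype X] [Fintype Y] (α : ℝ≥0∞) (W : X → Y → ℝ≥0∞) (r : ℝ) : EReal :=
  ⨆ c : {c : ℕ → ℝ // RateOK r c},
    Filter.liminf
      (fun n : ℕ => (((-1 : ℝ) / n : ℝ) : EReal) * eLog2 (simD α (prodCh n W) (c.1 n)))
      Filter.atTop

/-- Strong converse exponent `E_sc^{(α)}(W, r)`. -/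
def Esc [Fintype X] [Fintype Y] (α : ℝ≥0∞) (W : X → Y → ℝ≥0∞) (r : ℝ) : EReal :=
  ⨅ c : {c : ℕ → ℝ // RateOK r c},
    Filter.limsup
      (fun n : ℕ => (((1 : ℝ) / n : ℝ) : EReal) * simD α (prodCh n W) (c.1 n))
      Filter.atTop

/-- The `α`-Rényi simulation rate `R_RST^{(α)}(W)`. -/
def Rrst [Fintype X] [Fintype Y] (α : ℝ≥0∞) (W : X → Y → ℝ≥0∞) : EReal :=
  ⨅ c : {c : ℕ → ℝ // (∀ n, 0 ≤ c n) ∧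
      Filter.limsup (fun n : ℕ => simD α (prodCh n W) (c n)) Filter.atTop = 0},
    Filter.limsup (fun n : ℕ => ((c.1 n / n : ℝ) : EReal)) Filter.atTop

/-- n-fold product of a joint distribution on `X × Y`, as a distribution on pairs of
sequences. -/
def prodJoint [Fintype X] [Fintype Y] (n : ℕ) (P : X × Y → ℝ≥0∞) :
    (Fin n → X) × (Fin n → Y) → ℝ≥0∞ :=
  fun p => ∏ i, P (p.1 i, p.2 i)

/-- n-fold product distribution. -/
def prodDist [Fintype X] (n : ℕ) (P : X → ℝ≥0∞) : (Fin n → X) → ℝ≥0∞ :=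
  fun xs => ∏ i, P (xs i)

/-- The type (empirical count vector) of a sequence. -/
def seqType [Fintype Y] [DecidableEq Y] {n : ℕ} (ys : Fin n → Y) : Y → ℕ :=
  fun y => (Finset.univ.filter fun i => ys i = y).card

/-- The cardinality of the type class of a sequence. -/
def typeClassCard [Fintype Y] [DecidableEq Y] {n : ℕ} (ys : Fin n → Y) : ℕ :=
  (Finset.univ.filter fun zs : Fin n → Y => seqType zs = seqType ys).card

/-- The number of types of sequences in `Y^n`. -/
def numTypes (Y : Type*) [Fintype Y] [DecidableEq Y] (n : ℕ) : ℕ :=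
  (Finset.univ.image fun ys : Fin n → Y => seqType ys).card

/-- `Φ_{Y^n}`: the uniform mixture over type classes of `Y^n`. -/
def PhiY (Y : Type*) [Fintype Y] [DecidableEq Y] (n : ℕ) : (Fin n → Y) → ℝ≥0∞ :=
  fun ys => ((numTypes Y n : ℝ≥0∞) * (typeClassCard ys : ℝ≥0∞))⁻¹

end RST


namespace RST

lemma sum_pi_prod {M : ℕ} {Y : Type*} [Fintype Y] (f : Fin M → Y → ℝ≥0∞) :
    ∑ k : Fin M → Y, ∏ i, f i (k i) = ∏ i, ∑ y, f i y := by
  rw [Finset.prod_univ_sum, Fintype.piFinset_univ]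

/-- One-shot rejection sampling (last accepted sample is sent). -/
lemma rejection_core {X Y : Type*} [Fintype X] [Fintype Y] (Q : Y → ℝ≥0∞) (hQ : ∑ y, Q y = 1)
    (a : X → Y → ℝ≥0∞) (ha : ∀ x y, a x y ≤ 1) (M : ℕ) (hM : 0 < M) (c : ℝ)
    (hc : Real.logb 2 M ≤ c) :
    ∃ N : X → Y → ℝ≥0∞, IsSimulation c N ∧ ∀ x y,
      Q y * a x y * ∑ j ∈ Finset.range M, (1 - ∑ z, Q z * a x z) ^ j ≤ N x y := by
  classical
  let K := Fin M → Y
  let e : K ≃ Fin (Fintype.card K) := Fintype.equivFin K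
  let E : X → K → Fin M → ℝ≥0∞ := fun x k j =>
    a x (k j) * (∏ i with j < i, (1 - a x (k i))) +
      (if j = ⟨0, hM⟩ then ∏ i, (1 - a x (k i)) else 0)
  have hE : ∀ x k, ∑ j, E x k j = 1 := by
    intro x k
    have h := Finset.prod_add_ordered Finset.univ (fun i => 1 - a x (k i)) (fun i => a x (k i))
    have h1 : ∀ i, (1 - a x (k i)) + a x (k i) = 1 := fun i => tsub_add_cancel_of_le (ha _ _)
    simp only [h1, Finset.prod_const_one, mul_one] at h
    simp only [E, Finset.sum_add_distrib, Finset.sum_ite_eq', Finset.mem_univ, if_true]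
    rw [add_comm]; exact h.symm
  let N : X → Y → ℝ≥0∞ := fun x y => ∑ k : Fin (Fintype.card K), ∑ j,
    (∏ i, Q (e.symm k i)) * E x (e.symm k) j * (if e.symm k j = y then 1 else 0)
  refine ⟨N, ⟨Fintype.card K, M, fun k => ∏ i, Q (e.symm k i), fun x k j => E x (e.symm k) j,
    fun j k y => if e.symm k j = y then 1 else 0, hM, hc, ?_, ?_, ?_, ?_⟩, ?_⟩
  · rw [Equiv.sum_comp e.symm (fun k : K => ∏ i, Q (k i)), sum_pi_prod (fun _ => Q)]
    simp [hQ]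
  · intro x k; exact hE x _
  · intro j k; simp
  · intro x y; rfl
  · intro x y
    have hN : N x y = ∑ j, ∑ k : K, (∏ i, Q (k i)) * E x k j * (if k j = y then 1 else 0) := by
      rw [Finset.sum_comm]
      exact Equiv.sum_comp e.symm (fun k : K => ∑ j, (∏ i, Q (k i)) * E x k j *
        (if k j = y then 1 else 0))
    rw [hN]
    set A := ∑ z, Q z * a x z with hA
    have hfin : ∀ z, Q z ≠ ⊤ := fun z => by
      have : Q z ≤ 1 := hQ ▸ Finset.single_le_sum (f := Q) (fun _ _ => zero_le) (Finset.mem_univ z)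
      exact ne_top_of_le_ne_top ENNReal.one_ne_top this
    have hA1 : ∑ z, Q z * (1 - a x z) = 1 - A := by
      have : ∑ z, Q z * (1 - a x z) + A = 1 := by
        rw [hA, ← Finset.sum_add_distrib]
        refine Eq.trans ?_ hQ
        refine Finset.sum_congr rfl fun z _ => ?_
        rw [← mul_add, tsub_add_cancel_of_le (ha _ _), mul_one]
      have hAt : A ≠ ⊤ := by
        intro h; rw [h] at this; simp at this
      exact ENNReal.eq_sub_of_add_eq hAt this
    have key : ∀ j : Fin M, Q y * a x y * (1 - A) ^ (M - 1 - (j:ℕ)) ≤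
        ∑ k : K, (∏ i, Q (k i)) * E x k j * (if k j = y then 1 else 0) := by
      intro j
      let f : Fin M → Y → ℝ≥0∞ := fun i z =>
        if i = j then Q z * a x z * (if z = y then 1 else 0)
        else if j < i then Q z * (1 - a x z) else Q z
      have hf : ∏ i, ∑ z, f i z = Q y * a x y * (1 - A) ^ (M - 1 - (j:ℕ)) := by
        have h2 : ∀ i, ∑ z, f i z = (if i = j then Q y * a x y else 1) *
            (if j < i then 1 - A else 1) := by
          intro i
          by_cases hij : i = j
          · subst hij; simp [f]
          · by_cases hlt : j < i
            · simp [f, hij, hlt, hA1]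
            · simp [f, hij, hlt, hQ]
        simp only [h2, Finset.prod_mul_distrib]
        rw [Finset.prod_ite_eq' Finset.univ j (fun _ => Q y * a x y)]
        rw [Finset.prod_ite]
        have h3 : (Finset.univ.filter fun i => j < i) = Finset.Ioi j := by ext; simp
        simp [h3, Fin.card_Ioi]
      rw [← hf, ← sum_pi_prod]
      refine Finset.sum_le_sum fun k _ => ?_
      have h4 : ∏ i, f i (k i) = (∏ i, Q (k i)) *
          (a x (k j) * (∏ i with j < i, (1 - a x (k i)))) * (if k j = y then 1 else 0) := by
        have h5 : ∀ i, f i (k i) = Q (k i) * (if i = j then a x (k j) * (if k j = y then 1 else 0) else 1)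
            * (if j < i then 1 - a x (k i) else 1) := by
          intro i
          by_cases hij : i = j
          · subst hij; simp [f]
          · by_cases hlt : j < i
            · simp [f, hij, hlt]
            · simp [f, hij, hlt]
        simp only [h5, Finset.prod_mul_distrib]
        rw [Finset.prod_ite_eq' Finset.univ j (fun _ => a x (k j) * (if k j = y then 1 else 0)),
          Finset.prod_filter]
        simp only [Finset.mem_univ, if_true]
        ring
      rw [h4]
      gcongr
      exact le_self_add
    calc _ = ∑ j : Fin M, Q y * a x y * (1 - A) ^ (M - 1 - (j:ℕ)) := by
          rw [Fin.sum_univ_eq_sum_range (fun j => Q y * a x y * (1 - A) ^ (M - 1 - j)) M,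
            Finset.sum_range_reflect (fun j => Q y * a x y * (1 - A) ^ j) M, Finset.mul_sum]
      _ ≤ _ := Finset.sum_le_sum fun j _ => key j

lemma rejection {X Y : Type*} [Fintype X] [Fintype Y] (Q : Y → ℝ≥0∞) (hQ : ∑ y, Q y = 1)
    (W : X → Y → ℝ≥0∞) (hW : IsChannel W) (lam : ℝ) (hlam : 1 ≤ lam) (M : ℕ) (hM : 0 < M) (c : ℝ)
    (hc : Real.logb 2 M ≤ c) :
    ∃ N : X → Y → ℝ≥0∞, IsSimulation c N ∧ ∀ x y,
      ENNReal.ofReal (1 - Real.exp (-(M / lam))) * min (W x y) (ENNReal.ofReal lam * Q y)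
        ≤ N x y := by
  set L := ENNReal.ofReal lam with hL
  have hlam0 : 0 < lam := by linarith
  have hL0 : L ≠ 0 := by simp [hL, hlam0]
  have hLt : L ≠ ⊤ := by simp [hL]
  have hfin : ∀ z, Q z ≠ ⊤ := fun z => by
    have : Q z ≤ 1 := hQ ▸ Finset.single_le_sum (f := Q) (fun _ _ => zero_le) (Finset.mem_univ z)
    exact ne_top_of_le_ne_top ENNReal.one_ne_top this
  obtain ⟨N, hN, hb⟩ := rejection_core Q hQ (fun x y => min 1 (W x y / (L * Q y)))
    (fun x y => min_le_left _ _) M hM c hc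
  refine ⟨N, hN, fun x y => le_trans ?_ (hb x y)⟩
  have hmin : ∀ z, Q z * min 1 (W x z / (L * Q z)) = L⁻¹ * min (W x z) (L * Q z) := by
    intro z
    by_cases h0 : Q z = 0
    · simp [h0]
    · have h1 : L * Q z ≠ 0 := mul_ne_zero hL0 h0
      have h2 : L * Q z ≠ ⊤ := ENNReal.mul_ne_top hLt (hfin z)
      have : min (W x z) (L * Q z) = (L * Q z) * min 1 (W x z / (L * Q z)) := by
        rw [mul_min, mul_one, ENNReal.mul_div_cancel h1 h2, min_comm]
      rw [this, ← mul_assoc, ← mul_assoc, ENNReal.inv_mul_cancel hL0 hLt, one_mul]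
  have hA : ∑ z, Q z * min 1 (W x z / (L * Q z)) ≤ ENNReal.ofReal (1 / lam) := by
    simp only [hmin]
    rw [← Finset.mul_sum, one_div, ENNReal.ofReal_inv_of_pos hlam0]
    calc _ ≤ L⁻¹ * ∑ z, W x z := by gcongr; exact min_le_left _ _
      _ = _ := by rw [hW x, mul_one]
  have hu : 1 / lam ≤ 1 := by rw [div_le_one hlam0]; exact hlam
  have hsum : ENNReal.ofReal (lam * (1 - Real.exp (-(M / lam)))) ≤
      ∑ j ∈ Finset.range M, (1 - ∑ z, Q z * min 1 (W x z / (L * Q z))) ^ j := by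
    calc _ ≤ ENNReal.ofReal (∑ j ∈ Finset.range M, (1 - 1 / lam) ^ j) := by
          apply ENNReal.ofReal_le_ofReal
          have hg := mul_neg_geom_sum (1 - 1 / lam) M
          have h6 : (1 - 1 / lam) ^ M ≤ Real.exp (-(M / lam)) := by
            have : 1 - 1 / lam ≤ Real.exp (-(1 / lam)) := Real.one_sub_le_exp_neg _
            calc _ ≤ (Real.exp (-(1 / lam))) ^ M := by gcongr
              _ = _ := by rw [← Real.exp_nat_mul]; congr 1; ring
          have h7 : ∑ j ∈ Finset.range M, (1 - 1 / lam) ^ j = lam * (1 - (1 - 1 / lam) ^ M) := by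
            rw [← hg, ← mul_assoc]; rw [show lam * (1 - (1 - 1 / lam)) = 1 by field_simp; ring, one_mul]
          rw [h7]; gcongr
      _ = ∑ j ∈ Finset.range M, (1 - ENNReal.ofReal (1 / lam)) ^ j := by
          rw [ENNReal.ofReal_sum_of_nonneg (fun i _ => by apply pow_nonneg; linarith)]
          refine Finset.sum_congr rfl fun i _ => ?_
          rw [ENNReal.ofReal_pow (by linarith), ENNReal.ofReal_sub _ (by positivity),
            ENNReal.ofReal_one]
      _ ≤ _ := by gcongr
  refine le_trans ?_ (mul_le_mul_right hsum _)
  rw [hmin, ENNReal.ofReal_mul hlam0.le, ← hL]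
  apply le_of_eq
  rw [mul_comm L⁻¹, mul_assoc, ← mul_assoc L⁻¹, ENNReal.inv_mul_cancel hL0 hLt, one_mul, mul_comm]

/-- Kuhn–Tucker point for the Rényi capacity. -/
lemma exists_opt {X Y : Type*} [Fintype X] [Fintype Y] [Nonempty X]
    (B : X → Y → ℝ≥0∞) (hB : ∀ x y, B x y ≠ ⊤) (β : ℝ) (hβ0 : 0 < β) (hβ1 : β < 1) :
    ∃ P : X → ℝ≥0∞, IsDist P ∧ ∀ x, ∑ y, B x y * (∑ z, P z * B z y) ^ (β - 1) ≤
      ∑ y, (∑ z, P z * B z y) ^ β := by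
  classical
  let b : X → Y → ℝ := fun x y => (B x y).toReal
  have hb0 : ∀ x y, 0 ≤ b x y := fun x y => ENNReal.toReal_nonneg
  have hbB : ∀ x y, ENNReal.ofReal (b x y) = B x y := fun x y => ENNReal.ofReal_toReal (hB x y)
  let f : (X → ℝ) → ℝ := fun p => ∑ y, (∑ z, p z * b z y) ^ β
  have hf : Continuous f := by
    refine continuous_finsetSum _ fun y _ => ?_
    refine Continuous.rpow_const (by fun_prop) fun p => Or.inr hβ0.le
  obtain ⟨p, hp, hmax⟩ := (isCompact_stdSimplex ℝ X).exists_isMaxOn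
    ⟨Pi.single (Classical.arbitrary X) 1, single_mem_stdSimplex ℝ _⟩ hf.continuousOn
  have hp0 := hp.1
  let S : Y → ℝ := fun y => ∑ z, p z * b z y
  have hS0 : ∀ y, 0 ≤ S y := fun y => Finset.sum_nonneg fun z _ => mul_nonneg (hp0 z) (hb0 z y)
  have hSE : ∀ y, ENNReal.ofReal (S y) = ∑ z, ENNReal.ofReal (p z) * B z y := by
    intro y
    rw [ENNReal.ofReal_sum_of_nonneg (fun z _ => mul_nonneg (hp0 z) (hb0 z y))]
    refine Finset.sum_congr rfl fun z _ => ?_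
    rw [ENNReal.ofReal_mul (hp0 z), hbB]
  refine ⟨fun x => ENNReal.ofReal (p x), ?_, fun x => ?_⟩
  · unfold IsDist
    rw [← ENNReal.ofReal_sum_of_nonneg (fun z _ => hp0 z), hp.2, ENNReal.ofReal_one]
  · simp only [← hSE]
    -- real inequality for each ε
    have hreal : ∀ ε : ℝ, 0 < ε → ε < 1 →
        ∑ y, b x y * ((1 - ε) * S y + ε * b x y) ^ (β - 1) ≤
          (1 - ε) ^ (β - 1) * ∑ y, S y ^ β := by
      intro ε h0 h1
      have hmem : (1 - ε) • p + ε • (Pi.single x 1 : X → ℝ) ∈ stdSimplex ℝ X :=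
        convex_stdSimplex ℝ X hp (single_mem_stdSimplex ℝ x) (by linarith) h0.le (by ring)
      have hle := hmax hmem
      have hfe : f ((1 - ε) • p + ε • (Pi.single x 1 : X → ℝ)) =
          ∑ y, ((1 - ε) * S y + ε * b x y) ^ β := by
        refine Finset.sum_congr rfl fun y _ => ?_
        congr 1
        simp only [Pi.add_apply, Pi.smul_apply, smul_eq_mul, add_mul, Finset.sum_add_distrib, S,
          Finset.mul_sum]
        congr 1
        · exact Finset.sum_congr rfl fun z _ => by ring
        · simp [Pi.single_apply]
      have hle' : ∑ y, ((1 - ε) * S y + ε * b x y) ^ β ≤ ∑ y, S y ^ β := by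
        rw [← hfe]; exact hle
      have h1' : 0 < 1 - ε := by linarith
      have hpt : ∀ y, ((1 - ε) * S y + ε * b x y) ^ (β - 1) * (β * ε * (b x y - S y)) ≤
          ((1 - ε) * S y + ε * b x y) ^ β - S y ^ β := by
        intro y
        set N := (1 - ε) * S y + ε * b x y with hN
        have hN0 : 0 ≤ N := add_nonneg (mul_nonneg h1'.le (hS0 y)) (mul_nonneg h0.le (hb0 x y))
        rcases hN0.eq_or_lt with hz | hpos
        · have hSz : S y = 0 := by
            have := mul_nonneg h1'.le (hS0 y)
            have := mul_nonneg h0.le (hb0 x y)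
            have h3 : (1 - ε) * S y = 0 := by linarith
            rcases mul_eq_zero.1 h3 with h | h
            · linarith
            · exact h
          have hbz : b x y = 0 := by
            rw [hSz] at hN
            have h3 : ε * b x y = 0 := by linarith
            rcases mul_eq_zero.1 h3 with h | h
            · linarith
            · exact h
          rw [← hz, hSz, hbz]; simp
        · -- Bernoulli
          have hber := rpow_one_add_le_one_add_mul_self (s := S y / N - 1) (p := β)
            (by have := div_nonneg (hS0 y) hN0; linarith) hβ0.le hβ1.le
          have e1 : (1 + (S y / N - 1)) = S y / N := by ring
          rw [e1, Real.div_rpow (hS0 y) hN0, div_le_iff₀ (Real.rpow_pos_of_pos hpos _)] at hber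
          have e2 : N ^ β = N ^ (β - 1) * N := by
            rw [Real.rpow_sub_one hpos.ne']; field_simp
          have e3 : (1 + β * (S y / N - 1)) * N ^ β = N ^ β + N ^ (β - 1) * (β * (S y - N)) := by
            rw [e2]; field_simp
          have e4 : S y - N = - (ε * (b x y - S y)) := by rw [hN]; ring
          rw [e3, e4] at hber
          nlinarith [hber]
      have hsum := Finset.sum_le_sum fun y (_ : y ∈ Finset.univ) => hpt y
      rw [Finset.sum_sub_distrib] at hsum
      have h4 : ∑ y, ((1 - ε) * S y + ε * b x y) ^ (β - 1) * (β * ε * (b x y - S y)) =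
        β * ε * (∑ y, b x y * ((1 - ε) * S y + ε * b x y) ^ (β - 1) -
          ∑ y, S y * ((1 - ε) * S y + ε * b x y) ^ (β - 1)) := by
        rw [← Finset.sum_sub_distrib, Finset.mul_sum]
        exact Finset.sum_congr rfl fun y _ => by ring
      have h5 : ∑ y, b x y * ((1 - ε) * S y + ε * b x y) ^ (β - 1) -
          ∑ y, S y * ((1 - ε) * S y + ε * b x y) ^ (β - 1) ≤ 0 := by
        by_contra hcon
        push Not at hcon
        have := mul_pos (mul_pos hβ0 h0) hcon
        linarith
      have h6 : ∑ y, S y * ((1 - ε) * S y + ε * b x y) ^ (β - 1) ≤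
          (1 - ε) ^ (β - 1) * ∑ y, S y ^ β := by
        rw [Finset.mul_sum]
        refine Finset.sum_le_sum fun y _ => ?_
        rcases (hS0 y).eq_or_lt with hz | hpos
        · rw [← hz, Real.zero_rpow hβ0.ne']; simp
        · have : ((1 - ε) * S y + ε * b x y) ^ (β - 1) ≤ ((1 - ε) * S y) ^ (β - 1) :=
            Real.rpow_le_rpow_of_nonpos (mul_pos h1' hpos)
              (by have := mul_nonneg h0.le (hb0 x y); linarith) (by linarith)
          calc _ ≤ S y * ((1 - ε) * S y) ^ (β - 1) := by gcongr
            _ = _ := by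
              rw [Real.mul_rpow h1'.le hpos.le, Real.rpow_sub_one hpos.ne']; field_simp
      linarith
    -- ENNReal version
    have hE : ∀ ε : ℝ, 0 < ε → ε < 1 →
        ∑ y, B x y * (ENNReal.ofReal ((1 - ε) * S y + ε * b x y)) ^ (β - 1) ≤
          ENNReal.ofReal ((1 - ε) ^ (β - 1) * ∑ y, S y ^ β) := by
      intro ε h0 h1
      refine le_trans (le_of_eq ?_) (ENNReal.ofReal_le_ofReal (hreal ε h0 h1))
      have h1' : 0 < 1 - ε := by linarith
      have hN0 : ∀ y, 0 ≤ (1 - ε) * S y + ε * b x y := fun y =>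
        add_nonneg (mul_nonneg h1'.le (hS0 y)) (mul_nonneg h0.le (hb0 x y))
      rw [ENNReal.ofReal_sum_of_nonneg (fun y _ => mul_nonneg (hb0 x y) (Real.rpow_nonneg (hN0 y) _))]
      refine Finset.sum_congr rfl fun y _ => ?_
      rw [ENNReal.ofReal_mul (hb0 x y), hbB]
      rcases (hb0 x y).eq_or_lt with hz | hpos
      · have : B x y = 0 := by rw [← hbB, ← hz]; simp
        simp [this]
      · rw [ENNReal.ofReal_rpow_of_pos]
        have := mul_nonneg h1'.le (hS0 y)
        have := mul_pos h0 hpos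
        linarith
    have hR : ENNReal.ofReal (∑ y, S y ^ β) = ∑ y, ENNReal.ofReal (S y) ^ β := by
      rw [ENNReal.ofReal_sum_of_nonneg (fun y _ => Real.rpow_nonneg (hS0 y) _)]
      exact Finset.sum_congr rfl fun y _ => (ENNReal.ofReal_rpow_of_nonneg (hS0 y) hβ0.le).symm
    rw [← hR]
    have hT1 : Tendsto (fun ε : ℝ => ∑ y, B x y *
        (ENNReal.ofReal ((1 - ε) * S y + ε * b x y)) ^ (β - 1)) (nhdsWithin 0 (Set.Ioi 0))
        (nhds (∑ y, B x y * ENNReal.ofReal (S y) ^ (β - 1))) := by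
      refine tendsto_finsetSum _ fun y _ => ?_
      refine ENNReal.Tendsto.const_mul ?_ (Or.inr (hB x y))
      refine (ENNReal.continuous_rpow_const.tendsto _).comp ?_
      have : Continuous fun ε : ℝ => ENNReal.ofReal ((1 - ε) * S y + ε * b x y) := by
        refine ENNReal.continuous_ofReal.comp (by fun_prop)
      have h := (this.tendsto 0).mono_left (nhdsWithin_le_nhds (s := Set.Ioi 0))
      simpa using h
    have hT2 : Tendsto (fun ε : ℝ => ENNReal.ofReal ((1 - ε) ^ (β - 1) * ∑ y, S y ^ β))
        (nhdsWithin 0 (Set.Ioi 0)) (nhds (ENNReal.ofReal (∑ y, S y ^ β))) := by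
      have h : ContinuousAt (fun ε : ℝ => (1 - ε) ^ (β - 1) * ∑ y, S y ^ β) 0 := by
        refine ContinuousAt.mul ?_ continuousAt_const
        refine ContinuousAt.rpow_const (by fun_prop) (Or.inl (by norm_num))
      have h2 := (ENNReal.continuous_ofReal.tendsto _).comp
        (h.tendsto.mono_left (nhdsWithin_le_nhds (s := Set.Ioi 0)))
      simpa [Function.comp_def] using h2
    refine le_of_tendsto_of_tendsto hT1 hT2 ?_
    filter_upwards [Ioo_mem_nhdsGT (show (0:ℝ) < 1 by norm_num)] with ε hε
    exact hE ε hε.1 hε.2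

lemma elog2_mono {a b : ℝ≥0∞} (h : a ≤ b) : elog2 a ≤ elog2 b := by
  unfold elog2
  by_cases ha : a = 0
  · simp [ha]
  by_cases hb : b = ⊤
  · simp [hb]
  have ha' : a ≠ ⊤ := ne_top_of_le_ne_top hb h
  have hb' : b ≠ 0 := fun h0 => ha (le_antisymm (h0 ▸ h) zero_le)
  simp only [ha, ha', hb, hb', if_false]
  rw [EReal.coe_le_coe_iff]
  exact Real.logb_le_logb_of_le (by norm_num) (ENNReal.toReal_pos ha ha')
    (ENNReal.toReal_mono hb h)

lemma elog2_ofReal {a : ℝ} (h : 0 < a) : elog2 (ENNReal.ofReal a) = ((Real.logb 2 a : ℝ) : EReal) := by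
  unfold elog2
  rw [if_neg (by simpa using h), if_neg ENNReal.ofReal_ne_top, ENNReal.toReal_ofReal h.le]

lemma dist_le_one {Y : Type*} [Fintype Y] {Q : Y → ℝ≥0∞} (hQ : ∑ y, Q y = 1) (y : Y) : Q y ≤ 1 :=
  hQ ▸ Finset.single_le_sum (f := Q) (fun _ _ => zero_le) (Finset.mem_univ y)

lemma dist_ne_top {Y : Type*} [Fintype Y] {Q : Y → ℝ≥0∞} (hQ : ∑ y, Q y = 1) (y : Y) : Q y ≠ ⊤ :=
  ne_top_of_le_ne_top ENNReal.one_ne_top (dist_le_one hQ y)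

lemma dist_exists {Y : Type*} [Fintype Y] {Q : Y → ℝ≥0∞} (hQ : ∑ y, Q y = 1) : ∃ y, Q y ≠ 0 := by
  by_contra h
  push Not at h
  simp [h] at hQ

lemma margX_joint {X Y : Type*} [Fintype X] [Fintype Y] (P : X → ℝ≥0∞) (W : X → Y → ℝ≥0∞)
    (hW : IsChannel W) (x : X) : margX (joint P W) x = P x := by
  simp only [margX, joint]
  rw [← Finset.mul_sum, hW x, mul_one]

lemma one_add_ofReal_facts {t : ℝ} (ht : 0 < t) : (1 + ENNReal.ofReal t ≠ 0) ∧
    (1 + ENNReal.ofReal t ≠ 1) ∧ (1 + ENNReal.ofReal t ≠ ⊤) ∧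
    (1 + ENNReal.ofReal t).toReal = 1 + t := by
  have h : (1 : ℝ≥0∞) + ENNReal.ofReal t = ENNReal.ofReal (1 + t) := by
    rw [ENNReal.ofReal_add (by norm_num) ht.le, ENNReal.ofReal_one]
  rw [h]
  refine ⟨?_, ?_, ENNReal.ofReal_ne_top, ENNReal.toReal_ofReal (by linarith)⟩
  · simp; linarith
  · simp; linarith

lemma renyiD_one_add {Y : Type*} [Fintype Y] {t : ℝ} (ht : 0 < t) (P Q : Y → ℝ≥0∞) :
    renyiD (1 + ENNReal.ofReal t) P Q =
      ((t⁻¹ : ℝ) : EReal) * elog2 (∑ x, P x ^ (1 + t) * Q x ^ (-t)) := by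
  obtain ⟨h0, h1, h2, h3⟩ := one_add_ofReal_facts ht
  unfold renyiD
  rw [if_neg h0, if_neg h1, if_neg h2, h3]
  simp

lemma cap_finite {X Y : Type*} [Fintype X] [Fintype Y] [Nonempty X]
    (W : X → Y → ℝ≥0∞) (hW : IsChannel W) (t : ℝ) (ht : 0 < t) :
    ∃ Q : Y → ℝ≥0∞, IsDist Q ∧ ∃ I : ℝ, (I : EReal) ≤ renyiCap (1 + ENNReal.ofReal t) W ∧
      ∀ x, ∑ y, W x y ^ (1 + t) * Q y ^ (-t) ≤ ENNReal.ofReal ((2:ℝ) ^ (t * I)) := by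
  have hα : 0 < 1 + t := by linarith
  have hWt : ∀ x y, W x y ≠ ⊤ := fun x y => dist_ne_top (hW x) y
  set β := 1 / (1 + t) with hβ
  have hβ0 : 0 < β := by positivity
  have hβ1 : β < 1 := by rw [hβ, div_lt_one hα]; linarith
  have hβe : β - 1 = - (β * t) := by rw [hβ]; field_simp; ring
  obtain ⟨P, hP, hopt⟩ := exists_opt (fun x y => W x y ^ (1 + t))
    (fun x y => ENNReal.rpow_ne_top_of_nonneg hα.le (hWt x y)) β hβ0 hβ1
  set S : Y → ℝ≥0∞ := fun y => ∑ z, P z * W z y ^ (1 + t) with hS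
  set F := ∑ y, S y ^ β with hF
  have hPt := dist_ne_top hP
  have hSt : ∀ y, S y ≠ ⊤ := fun y => ENNReal.sum_ne_top.2 fun z _ =>
    ENNReal.mul_ne_top (hPt z) (ENNReal.rpow_ne_top_of_nonneg hα.le (hWt z y))
  have hFt : F ≠ ⊤ := ENNReal.sum_ne_top.2 fun y _ => ENNReal.rpow_ne_top_of_nonneg hβ0.le (hSt y)
  have hF0 : F ≠ 0 := by
    obtain ⟨x, hx⟩ := dist_exists hP
    obtain ⟨y, hy⟩ := dist_exists (hW x)
    intro h
    rw [hF, Finset.sum_eq_zero_iff] at h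
    have h1 := h y (Finset.mem_univ y)
    rw [ENNReal.rpow_eq_zero_iff_of_pos hβ0, hS, Finset.sum_eq_zero_iff] at h1
    have h2 := h1 x (Finset.mem_univ x)
    rcases mul_eq_zero.1 h2 with h3 | h3
    · exact hx h3
    · rw [ENNReal.rpow_eq_zero_iff_of_pos hα] at h3; exact hy h3
  have hGt : F ^ (1 + t) ≠ ⊤ := ENNReal.rpow_ne_top_of_nonneg hα.le hFt
  have hG0 : F ^ (1 + t) ≠ 0 := fun h => hF0 ((ENNReal.rpow_eq_zero_iff_of_pos hα).1 h)
  have hGpos : 0 < (F ^ (1 + t)).toReal := ENNReal.toReal_pos hG0 hGt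
  refine ⟨fun y => S y ^ β * F⁻¹, ?_, t⁻¹ * Real.logb 2 (F ^ (1 + t)).toReal, ?_, fun x => ?_⟩
  · unfold IsDist
    rw [← Finset.sum_mul, ← hF, ENNReal.mul_inv_cancel hF0 hFt]
  · refine le_trans ?_ (le_iSup _ (⟨P, hP⟩ : {P : X → ℝ≥0∞ // IsDist P}))
    refine le_iInf fun Q => ?_
    obtain ⟨Q, hQ⟩ := Q
    have hQt := dist_ne_top hQ
    rw [renyiD_one_add ht, EReal.coe_mul]
    refine mul_le_mul_of_nonneg_left ?_ (by exact_mod_cast (inv_pos.2 ht).le)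
    have hlog : ((Real.logb 2 (F ^ (1 + t)).toReal : ℝ) : EReal) = elog2 (F ^ (1 + t)) := by
      unfold elog2; rw [if_neg hG0, if_neg hGt]
    rw [hlog]
    apply elog2_mono
    have hsum : ∑ p : X × Y, joint P W p ^ (1 + t) * (margX (joint P W) p.1 * Q p.2) ^ (-t) =
        ∑ y, S y * Q y ^ (-t) := by
      rw [Fintype.sum_prod_type_right]
      refine Finset.sum_congr rfl fun y _ => ?_
      rw [hS, Finset.sum_mul]
      refine Finset.sum_congr rfl fun x _ => ?_
      simp only [margX_joint P W hW, joint]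
      by_cases hx : P x = 0
      · simp [hx, hα]
      · rw [ENNReal.mul_rpow_of_nonneg _ _ hα.le, ENNReal.mul_rpow_of_ne_top (hPt x) (hQt y)]
        have : P x ^ (1 + t) * P x ^ (-t) = P x := by
          rw [← ENNReal.rpow_add _ _ hx (hPt x)]; simp
        calc _ = (P x ^ (1 + t) * P x ^ (-t)) * W x y ^ (1 + t) * Q y ^ (-t) := by ring
          _ = _ := by rw [this]
    rw [hsum]
    by_cases htop : ∑ y, S y * Q y ^ (-t) = ⊤
    · rw [htop]; exact le_top
    have hQS : ∀ y, Q y = 0 → S y = 0 := by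
      intro y hy
      by_contra hne
      apply htop
      rw [ENNReal.sum_eq_top]
      refine ⟨y, Finset.mem_univ y, ?_⟩
      rw [hy, ENNReal.zero_rpow_of_neg (by linarith), ENNReal.mul_top hne]
    have hconj : (1 + t).HolderConjugate ((1 + t) / t) := by
      rw [Real.holderConjugate_iff]
      refine ⟨by linarith, by field_simp⟩
    have hhol := ENNReal.inner_le_Lp_mul_Lq Finset.univ (fun y => (S y * Q y ^ (-t)) ^ β)
      (fun y => Q y ^ (t * β)) hconj
    have e1 : ∀ y, ((S y * Q y ^ (-t)) ^ β) ^ (1 + t) = S y * Q y ^ (-t) := by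
      intro y
      rw [← ENNReal.rpow_mul, hβ, one_div, inv_mul_cancel₀ hα.ne', ENNReal.rpow_one]
    have e2 : ∀ y, (Q y ^ (t * β)) ^ ((1 + t) / t) = Q y := by
      intro y
      rw [← ENNReal.rpow_mul]
      have : t * β * ((1 + t) / t) = 1 := by rw [hβ]; field_simp
      rw [this, ENNReal.rpow_one]
    have e3 : ∀ y, (S y * Q y ^ (-t)) ^ β * Q y ^ (t * β) = S y ^ β := by
      intro y
      by_cases hy : Q y = 0
      · simp [hQS y hy, hβ0]
      · rw [ENNReal.mul_rpow_of_nonneg _ _ hβ0.le, ← ENNReal.rpow_mul, mul_assoc,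
          ← ENNReal.rpow_add _ _ hy (hQt y)]
        simp
    simp only [e1, e2, e3] at hhol
    rw [hQ, ENNReal.one_rpow, mul_one, ← hF] at hhol
    calc F ^ (1 + t) ≤ ((∑ y, S y * Q y ^ (-t)) ^ (1 / (1 + t))) ^ (1 + t) := by gcongr
      _ = _ := by rw [← ENNReal.rpow_mul, one_div, inv_mul_cancel₀ hα.ne', ENNReal.rpow_one]
  · have h1 : t * (t⁻¹ * Real.logb 2 (F ^ (1 + t)).toReal) = Real.logb 2 (F ^ (1 + t)).toReal := by
      field_simp
    rw [h1, Real.rpow_logb (by norm_num) (by norm_num) hGpos, ENNReal.ofReal_toReal hGt]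
    have h2 : ∀ y, (S y ^ β * F⁻¹) ^ (-t) = S y ^ (β - 1) * F ^ t := by
      intro y
      rw [ENNReal.mul_rpow_of_ne_top (ENNReal.rpow_ne_top_of_nonneg hβ0.le (hSt y))
        (ENNReal.inv_ne_top.2 hF0), ← ENNReal.rpow_mul, ENNReal.inv_rpow, ENNReal.rpow_neg, inv_inv,
        hβe]
      congr 2; ring
    simp only [h2, ← mul_assoc]
    rw [← Finset.sum_mul]
    calc _ ≤ F * F ^ t := by gcongr; exact hopt x
      _ = _ := by rw [ENNReal.rpow_add _ _ hF0 hFt, ENNReal.rpow_one]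

lemma cap_top {X Y : Type*} [Fintype X] [Fintype Y] [Nonempty X]
    (W : X → Y → ℝ≥0∞) (hW : IsChannel W) :
    ∃ Q : Y → ℝ≥0∞, IsDist Q ∧ ∃ I : ℝ, 0 ≤ I ∧ (I : EReal) ≤ renyiCap ⊤ W ∧
      ∀ x y, W x y ≤ ENNReal.ofReal ((2:ℝ) ^ I) * Q y := by
  set m : Y → ℝ≥0∞ := fun y => ⨆ x, W x y with hm
  set G := ∑ y, m y with hG
  have hWt : ∀ x y, W x y ≤ 1 := fun x y => dist_le_one (hW x) y
  have hGt : G ≠ ⊤ := ENNReal.sum_ne_top.2 fun y _ =>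
    ne_top_of_le_ne_top ENNReal.one_ne_top (iSup_le fun x => hWt x y)
  have hG1 : 1 ≤ G := by
    rw [← hW (Classical.arbitrary X)]
    exact Finset.sum_le_sum fun y _ => le_iSup (fun x => W x y) _
  have hG0 : G ≠ 0 := fun h => by rw [h] at hG1; simp at hG1
  have hGpos : 0 < G.toReal := ENNReal.toReal_pos hG0 hGt
  refine ⟨fun y => m y * G⁻¹, ?_, Real.logb 2 G.toReal, ?_, ?_, fun x y => ?_⟩
  · unfold IsDist
    rw [← Finset.sum_mul, ← hG, ENNReal.mul_inv_cancel hG0 hGt]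
  · apply Real.logb_nonneg (by norm_num)
    have := ENNReal.toReal_mono hGt hG1
    simpa using this
  · set c : ℝ≥0∞ := (Fintype.card X : ℝ≥0∞)⁻¹ with hc
    have hcard : (Fintype.card X : ℝ≥0∞) ≠ 0 := by simp
    have hc0 : c ≠ 0 := by simp [hc]
    have hct : c ≠ ⊤ := by simp [hc]
    have hP : IsDist (fun _ : X => c) := by
      unfold IsDist
      rw [Finset.sum_const, Finset.card_univ, nsmul_eq_mul, ENNReal.mul_inv_cancel hcard (by simp)]
    refine le_trans ?_ (le_iSup _ (⟨_, hP⟩ : {P : X → ℝ≥0∞ // IsDist P}))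
    refine le_iInf fun Q => ?_
    obtain ⟨Q, hQ⟩ := Q
    have hlog : ((Real.logb 2 G.toReal : ℝ) : EReal) = elog2 G := by
      unfold elog2; rw [if_neg hG0, if_neg hGt]
    unfold renyiD
    rw [if_neg (by simp), if_neg (by simp), if_pos rfl, hlog]
    apply elog2_mono
    simp only [margX_joint _ W hW, joint]
    set D := ⨆ p : X × Y, c * W p.1 p.2 / (c * Q p.2) with hD
    by_cases hDt : D = ⊤
    · rw [hDt]; exact le_top
    have hWD : ∀ x y, W x y ≤ D * Q y := by
      intro x y
      have h1 : c * W x y / (c * Q y) ≤ D :=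
        le_iSup (fun p : X × Y => c * W p.1 p.2 / (c * Q p.2)) (x, y)
      rw [ENNReal.mul_div_mul_left _ _ hc0 hct] at h1
      by_cases hq : Q y = 0
      · by_cases hw : W x y = 0
        · simp [hw]
        · rw [hq, ENNReal.div_zero hw] at h1
          exact absurd (top_le_iff.1 h1) hDt
      · exact (ENNReal.div_le_iff hq (dist_ne_top hQ y)).1 h1
    calc G ≤ ∑ y, D * Q y := Finset.sum_le_sum fun y _ => iSup_le fun x => hWD x y
      _ = D := by rw [← Finset.mul_sum, hQ, mul_one]
  · rw [Real.rpow_logb (by norm_num) (by norm_num) hGpos, ENNReal.ofReal_toReal hGt]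
    beta_reduce
    rw [mul_comm (m y), ← mul_assoc, ENNReal.mul_inv_cancel hG0 hGt, one_mul]
    exact le_iSup (fun x => W x y) x

lemma ereal_neg_mul {c v : ℝ} (hc : c < 0) {x : EReal} (h : (v : EReal) ≤ x) :
    (c : EReal) * x ≤ ((c * v : ℝ) : EReal) := by
  induction x with
  | bot => simp at h
  | top => rw [EReal.coe_mul_top_of_neg hc]; exact bot_le
  | coe x =>
    rw [EReal.coe_le_coe_iff] at h
    rw [← EReal.coe_mul, EReal.coe_le_coe_iff]
    exact mul_le_mul_of_nonpos_left h hc.le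

lemma ereal_coe_sum {Y : Type*} (s : Finset Y) (f : Y → ℝ) :
    ((∑ y ∈ s, f y : ℝ) : EReal) = ∑ y ∈ s, (f y : EReal) := by
  induction s using Finset.cons_induction with
  | empty => simp
  | cons a s ha ih => rw [Finset.sum_cons, Finset.sum_cons, EReal.coe_add, ih]

lemma toReal_dist {Y : Type*} [Fintype Y] {Q : Y → ℝ≥0∞} (hQ : ∑ y, Q y = 1) :
    ∑ y, (Q y).toReal = 1 := by
  rw [← ENNReal.toReal_sum (fun y _ => dist_ne_top hQ y), hQ, ENNReal.toReal_one]

lemma div_scale {Y : Type*} [Fintype Y] (P N : Y → ℝ≥0∞) (hP : ∑ y, P y = 1) (κ : ℝ) (hκ : 0 < κ)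
    (h : ∀ y, ENNReal.ofReal κ * P y ≤ N y) (α : ℝ≥0∞) (hα : α ≠ 0) :
    renyiD α P N ≤ ((Real.logb 2 κ⁻¹ : ℝ) : EReal) := by
  have hPt := dist_ne_top hP
  have hκ0 : ENNReal.ofReal κ ≠ 0 := by simpa using hκ
  have hκt : ENNReal.ofReal κ ≠ ⊤ := ENNReal.ofReal_ne_top
  have hdiv : ∀ y, P y / N y ≤ ENNReal.ofReal κ⁻¹ := by
    intro y
    apply ENNReal.div_le_of_le_mul
    calc P y = ENNReal.ofReal κ⁻¹ * (ENNReal.ofReal κ * P y) := by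
          rw [ENNReal.ofReal_inv_of_pos hκ, ← mul_assoc, ENNReal.inv_mul_cancel hκ0 hκt, one_mul]
      _ ≤ _ := by gcongr; exact h y
  have hlogd : ∀ y, elog2 (P y / N y) ≤ ((Real.logb 2 κ⁻¹ : ℝ) : EReal) := fun y => by
    rw [← elog2_ofReal (inv_pos.2 hκ)]; exact elog2_mono (hdiv y)
  unfold renyiD
  rw [if_neg hα]
  split_ifs with h1 h2
  · calc _ ≤ ∑ y, (((P y).toReal * Real.logb 2 κ⁻¹ : ℝ) : EReal) := by
          refine Finset.sum_le_sum fun y _ => ?_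
          rw [EReal.coe_mul]
          exact mul_le_mul_of_nonneg_left (hlogd y) (by exact_mod_cast ENNReal.toReal_nonneg)
      _ = _ := by rw [← ereal_coe_sum, ← Finset.sum_mul, toReal_dist hP, one_mul]
  · rw [← elog2_ofReal (inv_pos.2 hκ)]
    exact elog2_mono (iSup_le hdiv)
  · set a := α.toReal with ha
    have ha0 : 0 < a := ENNReal.toReal_pos hα h2
    have ha1 : a ≠ 1 := by
      intro h3
      apply h1
      rw [← ENNReal.ofReal_toReal h2, ← ha, h3, ENNReal.ofReal_one]
    have hterm : ∀ y, P y ^ a * (ENNReal.ofReal κ * P y) ^ (1 - a) =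
        ENNReal.ofReal κ ^ (1 - a) * P y := by
      intro y
      by_cases hy : P y = 0
      · simp [hy, ha0]
      · rw [ENNReal.mul_rpow_of_ne_top hκt (hPt y), mul_left_comm,
          ← ENNReal.rpow_add _ _ hy (hPt y)]
        simp
    have hlogκ : Real.logb 2 κ⁻¹ = (a - 1)⁻¹ * Real.logb 2 (κ ^ (1 - a)) := by
      have : a - 1 ≠ 0 := sub_ne_zero.2 ha1
      rw [Real.logb_inv, Real.logb_rpow_eq_mul_logb_of_pos hκ]
      field_simp
      ring
    have hsumκ : ∑ y, P y ^ a * (ENNReal.ofReal κ * P y) ^ (1 - a) =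
        ENNReal.ofReal (κ ^ (1 - a)) := by
      simp only [hterm]
      rw [← Finset.mul_sum, hP, mul_one, ENNReal.ofReal_rpow_of_pos hκ]
    rcases lt_or_gt_of_ne ha1 with hlt | hgt
    · rw [hlogκ]
      apply ereal_neg_mul (inv_lt_zero.2 (by linarith))
      rw [← elog2_ofReal (Real.rpow_pos_of_pos hκ _), ← hsumκ]
      apply elog2_mono
      refine Finset.sum_le_sum fun y _ => ?_
      gcongr
      exact h y
    · rw [hlogκ, EReal.coe_mul]
      refine mul_le_mul_of_nonneg_left ?_ (by exact_mod_cast (inv_pos.2 (by linarith)).le)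
      rw [← elog2_ofReal (Real.rpow_pos_of_pos hκ _), ← hsumκ]
      apply elog2_mono
      refine Finset.sum_le_sum fun y _ => ?_
      have e : 1 - a = -(a - 1) := by ring
      refine mul_le_mul_right ?_ _
      rw [e, ENNReal.rpow_neg, ENNReal.rpow_neg]
      apply ENNReal.inv_le_inv.2
      exact ENNReal.rpow_le_rpow (h y) (by linarith)

lemma logb_one_add_le {η : ℝ} (hη : 0 ≤ η) : Real.logb 2 (1 + η) ≤ η / Real.log 2 := by
  rw [Real.logb]
  have : 0 < Real.log 2 := Real.log_pos (by norm_num)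
  gcongr
  have := Real.log_le_sub_one_of_pos (show 0 < 1 + η by linarith)
  linarith

/-- orders above one -/
lemma div_eta_gt {Y : Type*} [Fintype Y] (P N : Y → ℝ≥0∞)
    (s : ℝ) (hs : 0 < s) (η : ℝ) (hη : 0 ≤ η)
    (h : ∑ y, P y ^ (1 + s) * N y ^ (-s) ≤ ENNReal.ofReal (1 + η)) :
    renyiD (1 + ENNReal.ofReal s) P N ≤ ((η / (s * Real.log 2) : ℝ) : EReal) := by
  rw [renyiD_one_add hs]
  have h1 : η / (s * Real.log 2) = s⁻¹ * (η / Real.log 2) := by field_simp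
  rw [h1, EReal.coe_mul]
  refine mul_le_mul_of_nonneg_left ?_ (by exact_mod_cast (inv_pos.2 hs).le)
  refine le_trans (elog2_mono h) ?_
  rw [elog2_ofReal (by linarith), EReal.coe_le_coe_iff]
  exact logb_one_add_le hη

lemma supp_of_sum {Y : Type*} [Fintype Y] (P N : Y → ℝ≥0∞) (t : ℝ) (ht : 0 < t)
    (h : ∑ y, P y ^ (1 + t) * N y ^ (-t) ≠ ⊤) (y : Y) (hy : P y ≠ 0) : N y ≠ 0 := by
  intro hn
  apply h
  rw [ENNReal.sum_eq_top]
  refine ⟨y, Finset.mem_univ y, ?_⟩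
  rw [hn, ENNReal.zero_rpow_of_neg (by linarith), ENNReal.mul_top]
  intro h0
  exact hy ((ENNReal.rpow_eq_zero_iff_of_pos (by linarith)).1 h0)

/-- order one -/
lemma div_eta_one {Y : Type*} [Fintype Y] (P N : Y → ℝ≥0∞) (hP : ∑ y, P y = 1)
    (hN : ∀ y, N y ≠ ⊤) (t : ℝ) (ht : 0 < t) (η : ℝ) (hη : 0 ≤ η)
    (h : ∑ y, P y ^ (1 + t) * N y ^ (-t) ≤ ENNReal.ofReal (1 + η)) :
    renyiD 1 P N ≤ ((η / (t * Real.log 2) : ℝ) : EReal) := by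
  have hfin := ne_top_of_le_ne_top ENNReal.ofReal_ne_top h
  have hsupp := supp_of_sum P N t ht hfin
  have hPt := dist_ne_top hP
  have hl2 : 0 < Real.log 2 := Real.log_pos (by norm_num)
  unfold renyiD
  rw [if_neg one_ne_zero, if_pos rfl]
  have hterm : ∀ y, ((P y).toReal : EReal) * elog2 (P y / N y) ≤
      (((t * Real.log 2)⁻¹ * ((P y ^ (1 + t) * N y ^ (-t)).toReal - (P y).toReal) : ℝ) : EReal) := by
    intro y
    by_cases hy : P y = 0
    · simp [hy, show (0:ℝ) < 1 + t by linarith]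
    · have hn := hsupp y hy
      have hp : 0 < (P y).toReal := ENNReal.toReal_pos hy (hPt y)
      have hn' : 0 < (N y).toReal := ENNReal.toReal_pos hn (hN y)
      have h1 : P y / N y = ENNReal.ofReal ((P y).toReal / (N y).toReal) := by
        rw [← ENNReal.toReal_div, ENNReal.ofReal_toReal (ENNReal.div_ne_top (hPt y) hn)]
      rw [h1, elog2_ofReal (div_pos hp hn'), ← EReal.coe_mul, EReal.coe_le_coe_iff,
        ENNReal.toReal_mul, ← ENNReal.toReal_rpow, ← ENNReal.toReal_rpow]
      set p := (P y).toReal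
      set n := (N y).toReal
      have h2 : p ^ (1 + t) * n ^ (-t) = p * (p / n) ^ t := by
        rw [Real.rpow_add hp, Real.rpow_one, Real.div_rpow hp.le hn'.le, Real.rpow_neg hn'.le]
        field_simp
      rw [h2, Real.logb]
      have h3 : Real.log (p / n) ≤ ((p / n) ^ t - 1) / t := by
        rw [le_div_iff₀ ht, mul_comm, ← Real.log_rpow (div_pos hp hn')]
        exact Real.log_le_sub_one_of_pos (Real.rpow_pos_of_pos (div_pos hp hn') _)
      calc p * (Real.log (p / n) / Real.log 2) ≤ p * (((p / n) ^ t - 1) / t / Real.log 2) := by gcongr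
        _ = _ := by field_simp
  refine le_trans (Finset.sum_le_sum fun y _ => hterm y) ?_
  rw [← ereal_coe_sum, EReal.coe_le_coe_iff, ← Finset.mul_sum, Finset.sum_sub_distrib,
    toReal_dist hP, ← ENNReal.toReal_sum (fun y hy => ENNReal.sum_ne_top.1 hfin y hy)]
  have h4 := ENNReal.toReal_mono ENNReal.ofReal_ne_top h
  rw [ENNReal.toReal_ofReal (by linarith)] at h4
  rw [div_eq_inv_mul]
  gcongr
  linarith

/-- orders below one -/
lemma div_eta_lt {Y : Type*} [Fintype Y] (P N : Y → ℝ≥0∞) (hP : ∑ y, P y = 1)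
    (hN : ∀ y, N y ≠ ⊤) (t : ℝ) (ht : 0 < t) (η : ℝ) (hη : 0 ≤ η)
    (h : ∑ y, P y ^ (1 + t) * N y ^ (-t) ≤ ENNReal.ofReal (1 + η)) (a : ℝ) (ha0 : 0 < a)
    (ha1 : a < 1) :
    renyiD (ENNReal.ofReal a) P N ≤ ((η / (t * Real.log 2) : ℝ) : EReal) := by
  have hfin := ne_top_of_le_ne_top ENNReal.ofReal_ne_top h
  have hsupp := supp_of_sum P N t ht hfin
  have hPt := dist_ne_top hP
  unfold renyiD
  rw [if_neg (by simpa using ha0), if_neg (by simpa using ha1.ne), if_neg ENNReal.ofReal_ne_top,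
    ENNReal.toReal_ofReal ha0.le]
  set A := ∑ y, P y ^ a * N y ^ (1 - a) with hA
  have hu : 0 < 1 - a := by linarith
  have htu : 0 < t + (1 - a) := by linarith
  have hη1 : 0 < 1 + η := by linarith
  set θ := t / (t + (1 - a)) with hθ
  set θ' := (1 - a) / (t + (1 - a)) with hθ'
  have hθ0 : 0 < θ := by positivity
  have hθ0' : 0 < θ' := by positivity
  have hθ1 : θ + θ' = 1 := by rw [hθ, hθ']; field_simp
  have hex : a * θ + (1 + t) * θ' = 1 := by rw [hθ, hθ']; field_simp; ring
  have hex2 : (1 - a) * θ + (-t) * θ' = 0 := by rw [hθ, hθ']; field_simp; ring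
  have hconj : (θ⁻¹).HolderConjugate (θ'⁻¹) := by
    rw [Real.holderConjugate_iff]
    refine ⟨?_, by simpa using hθ1⟩
    exact (one_lt_inv₀ hθ0).2 (by linarith)
  have hhol := ENNReal.inner_le_Lp_mul_Lq Finset.univ (fun y => (P y ^ a * N y ^ (1 - a)) ^ θ)
      (fun y => (P y ^ (1 + t) * N y ^ (-t)) ^ θ') hconj
  have e1 : ∀ y, ((P y ^ a * N y ^ (1 - a)) ^ θ) ^ θ⁻¹ = P y ^ a * N y ^ (1 - a) := fun y => by
    rw [← ENNReal.rpow_mul, mul_inv_cancel₀ hθ0.ne', ENNReal.rpow_one]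
  have e2 : ∀ y, ((P y ^ (1 + t) * N y ^ (-t)) ^ θ') ^ θ'⁻¹ = P y ^ (1 + t) * N y ^ (-t) :=
    fun y => by
    rw [← ENNReal.rpow_mul, mul_inv_cancel₀ hθ0'.ne', ENNReal.rpow_one]
  have e3 : ∀ y, (P y ^ a * N y ^ (1 - a)) ^ θ * (P y ^ (1 + t) * N y ^ (-t)) ^ θ' = P y := by
    intro y
    by_cases hy : P y = 0
    · simp [hy, ha0, hθ0]
    · have hn := hsupp y hy
      rw [ENNReal.mul_rpow_of_nonneg _ _ hθ0.le, ENNReal.mul_rpow_of_nonneg _ _ hθ0'.le,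
        ← ENNReal.rpow_mul, ← ENNReal.rpow_mul, ← ENNReal.rpow_mul, ← ENNReal.rpow_mul,
        mul_mul_mul_comm, ← ENNReal.rpow_add _ _ hy (hPt y), ← ENNReal.rpow_add _ _ hn (hN y),
        hex, hex2]
      simp
  simp only [e1, e2, e3] at hhol
  rw [hP, ← hA, one_div, one_div, inv_inv, inv_inv] at hhol
  have h5 : (1 : ℝ≥0∞) ≤ A * ENNReal.ofReal ((1 + η) ^ ((1 - a) / t)) := by
    have h6 : (1 : ℝ≥0∞) ≤ A ^ θ * (ENNReal.ofReal (1 + η)) ^ θ' := le_trans hhol (by gcongr)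
    have h7 := ENNReal.rpow_le_rpow h6 (inv_pos.2 hθ0).le
    rw [ENNReal.one_rpow, ENNReal.mul_rpow_of_nonneg _ _ (inv_pos.2 hθ0).le, ← ENNReal.rpow_mul,
      ← ENNReal.rpow_mul, mul_inv_cancel₀ hθ0.ne', ENNReal.rpow_one,
      ENNReal.ofReal_rpow_of_pos hη1] at h7
    have : θ' * θ⁻¹ = (1 - a) / t := by rw [hθ, hθ']; field_simp
    rwa [this] at h7
  have h8 : ENNReal.ofReal (((1 + η) ^ ((1 - a) / t))⁻¹) ≤ A := by
    rw [ENNReal.ofReal_inv_of_pos (Real.rpow_pos_of_pos hη1 _)]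
    rw [ENNReal.inv_le_iff_le_mul (fun _ => by simpa using Real.rpow_pos_of_pos hη1 _)
      (fun h0 => absurd h0 ENNReal.ofReal_ne_top)]
    rwa [mul_comm]
  have h9 := elog2_mono h8
  rw [elog2_ofReal (inv_pos.2 (Real.rpow_pos_of_pos hη1 _))] at h9
  refine le_trans (ereal_neg_mul (inv_lt_zero.2 (by linarith)) h9) ?_
  rw [EReal.coe_le_coe_iff, Real.logb_inv, Real.logb_rpow_eq_mul_logb_of_pos hη1]
  have hl := logb_one_add_le hη
  have e : (a - 1)⁻¹ * -((1 - a) / t * Real.logb 2 (1 + η)) = t⁻¹ * Real.logb 2 (1 + η) := by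
    have : a - 1 ≠ 0 := by linarith
    field_simp
    ring
  rw [e]
  calc _ ≤ t⁻¹ * (η / Real.log 2) := by gcongr
    _ = _ := by field_simp

/-- The moment bound for the truncated distribution. -/
lemma moment_bound {Y : Type*} [Fintype Y] (P N q : Y → ℝ≥0∞) (hP : ∑ y, P y = 1)
    (hq : ∀ y, q y ≠ ⊤) (κ L : ℝ≥0∞) (hκt : κ ≠ ⊤) (hLt : L ≠ ⊤)
    (h : ∀ y, κ * min (P y) (L * q y) ≤ N y) (s t : ℝ) (hs : 0 < s) (hst : s ≤ t) :
    ∑ y, P y ^ (1 + s) * N y ^ (-s) ≤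
      κ ^ (-s) * (1 + L ^ (-t) * ∑ y, P y ^ (1 + t) * q y ^ (-t)) := by
  have hPt := dist_ne_top hP
  have ht : 0 < t := lt_of_lt_of_le hs hst
  have hpt : ∀ y, P y ^ (1 + s) * N y ^ (-s) ≤
      κ ^ (-s) * (P y + L ^ (-t) * (P y ^ (1 + t) * q y ^ (-t))) := by
    intro y
    by_cases hy : P y = 0
    · simp [hy, show (0:ℝ) < 1 + s by linarith]
    have hLq : L * q y ≠ ⊤ := ENNReal.mul_ne_top hLt (hq y)
    have hmt : min (P y) (L * q y) ≠ ⊤ := ne_top_of_le_ne_top (hPt y) (min_le_left _ _)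
    have h1 : N y ^ (-s) ≤ κ ^ (-s) * (min (P y) (L * q y)) ^ (-s) := by
      rw [← ENNReal.mul_rpow_of_ne_top hκt hmt, ENNReal.rpow_neg, ENNReal.rpow_neg]
      apply ENNReal.inv_le_inv.2
      gcongr
      exact h y
    have h2 : P y ^ (1 + s) * (min (P y) (L * q y)) ^ (-s) ≤
        P y + L ^ (-t) * (P y ^ (1 + t) * q y ^ (-t)) := by
      have h3 : L ^ (-t) * (P y ^ (1 + t) * q y ^ (-t)) = P y ^ (1 + t) * (L * q y) ^ (-t) := by
        rw [ENNReal.mul_rpow_of_ne_top hLt (hq y)]; ring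
      rw [h3]
      rcases le_total (P y) (L * q y) with hle | hle
      · rw [min_eq_left hle, ← ENNReal.rpow_add _ _ hy (hPt y)]
        simp
      · rw [min_eq_right hle]
        refine le_trans ?_ le_add_self
        by_cases hz : L * q y = 0
        · rw [hz, ENNReal.zero_rpow_of_neg (by linarith : -t < 0), ENNReal.mul_top]
          · exact le_top
          · intro h0
            exact hy ((ENNReal.rpow_eq_zero_iff_of_pos (by linarith)).1 h0)
        · have e : ∀ v : ℝ, P y ^ (1 + v) * (L * q y) ^ (-v) = P y * (P y / (L * q y)) ^ v := by
            intro v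
            rw [ENNReal.rpow_add _ _ hy (hPt y), ENNReal.rpow_one, mul_assoc, div_eq_mul_inv,
              ENNReal.mul_rpow_of_ne_top (hPt y) (ENNReal.inv_ne_top.2 hz), ENNReal.inv_rpow,
              ENNReal.rpow_neg]
          rw [e, e]
          gcongr
          rw [ENNReal.le_div_iff_mul_le (Or.inl hz) (Or.inl hLq), one_mul]
          exact hle
    calc _ ≤ P y ^ (1 + s) * (κ ^ (-s) * (min (P y) (L * q y)) ^ (-s)) := by gcongr
      _ = κ ^ (-s) * (P y ^ (1 + s) * (min (P y) (L * q y)) ^ (-s)) := by ring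
      _ ≤ _ := by gcongr
  refine le_trans (Finset.sum_le_sum fun y _ => hpt y) (le_of_eq ?_)
  rw [← Finset.mul_sum, Finset.sum_add_distrib, hP, ← Finset.mul_sum]

def Mseq (r : ℝ) (n : ℕ) : ℕ := ⌈((n:ℝ) ^ 2 + 1) * (2:ℝ) ^ (n * r)⌉₊

def cseq (r : ℝ) (n : ℕ) : ℝ := Real.logb 2 (Mseq r n)

lemma Mseq_ge (r : ℝ) (n : ℕ) : ((n:ℝ) ^ 2 + 1) * (2:ℝ) ^ (n * r) ≤ Mseq r n := Nat.le_ceil _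

lemma Mseq_pos (r : ℝ) (n : ℕ) : 0 < Mseq r n := by
  unfold Mseq; rw [Nat.ceil_pos]; positivity

lemma cseq_nonneg (r : ℝ) (n : ℕ) : 0 ≤ cseq r n := by
  unfold cseq
  apply Real.logb_nonneg (by norm_num)
  exact_mod_cast Mseq_pos r n

lemma cseq_le (r : ℝ) (hr : 0 ≤ r) (n : ℕ) :
    cseq r n ≤ 1 + 2 * Real.logb 2 ((n:ℝ) + 1) + n * r := by
  have h2 : (1:ℝ) ≤ (2:ℝ) ^ (n * r) := Real.one_le_rpow (by norm_num) (by positivity)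
  have hx : 1 ≤ ((n:ℝ) ^ 2 + 1) * (2:ℝ) ^ (n * r) := by nlinarith [sq_nonneg (n:ℝ)]
  have h1 : (Mseq r n : ℝ) ≤ 2 * ((n:ℝ) + 1) ^ 2 * (2:ℝ) ^ (n * r) := by
    have := (Nat.ceil_lt_add_one (a := ((n:ℝ) ^ 2 + 1) * (2:ℝ) ^ (n * r)) (by positivity)).le
    have hn : (0:ℝ) ≤ n := by positivity
    calc (Mseq r n : ℝ) ≤ 2 * (((n:ℝ) ^ 2 + 1) * (2:ℝ) ^ (n * r)) := by unfold Mseq; linarith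
      _ ≤ 2 * (((n:ℝ) + 1) ^ 2 * (2:ℝ) ^ (n * r)) := by gcongr; nlinarith
      _ = _ := by ring
  have hM : (0:ℝ) < Mseq r n := by exact_mod_cast Mseq_pos r n
  have hn1 : (0:ℝ) < (n:ℝ) + 1 := by positivity
  calc cseq r n ≤ Real.logb 2 (2 * ((n:ℝ) + 1) ^ 2 * (2:ℝ) ^ (n * r)) :=
        Real.logb_le_logb_of_le (by norm_num) hM h1
    _ = _ := by
      rw [Real.logb_mul (by positivity) (by positivity), Real.logb_mul (by norm_num) (by positivity),
        Real.logb_pow, Real.logb_rpow (by norm_num) (by norm_num), Real.logb_self_eq_one (by norm_num)]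
      norm_num

lemma rateOK_cseq (r : ℝ) (hr : 0 ≤ r) : RateOK r (cseq r) := by
  refine ⟨cseq_nonneg r, ?_⟩
  have hT : Tendsto (fun n : ℕ => (1 + 2 * Real.logb 2 ((n:ℝ) + 1)) / n + r) atTop (nhds r) := by
    have h1 := (Real.tendsto_pow_log_div_mul_add_atTop 1 (-1) 1 one_ne_zero).comp
      (tendsto_atTop_add_const_right atTop (1:ℝ) (tendsto_natCast_atTop_atTop (R := ℝ)))
    have h2 : Tendsto (fun n : ℕ => (1:ℝ) / n) atTop (nhds 0) := tendsto_one_div_atTop_nhds_zero_nat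
    have h3 := (h2.add (h1.const_mul (2 / Real.log 2))).add_const r
    simp only [mul_zero, add_zero, zero_add] at h3
    refine h3.congr fun n => ?_
    simp only [Function.comp, Real.logb, pow_one]
    rw [show (1:ℝ) * ((n:ℝ) + 1) + -1 = n by ring]
    ring
  have hT' := (continuous_coe_real_ereal.tendsto r).comp hT
  rw [← hT'.limsup_eq]
  refine limsup_le_limsup ?_
  filter_upwards [eventually_gt_atTop 0] with n hn
  have hn' : (0:ℝ) < n := by exact_mod_cast hn
  simp only [Function.comp, EReal.coe_le_coe_iff]
  rw [div_add' _ _ _ hn'.ne']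
  gcongr
  have := cseq_le r hr n
  linarith

lemma neg_inv_mul_eLog2 {n : ℕ} (hn : 0 < n) {x : EReal} {v : ℝ}
    (h : x ≤ (((2:ℝ) ^ (-(n * v)) : ℝ) : EReal)) :
    (v : EReal) ≤ (((-1 : ℝ) / n : ℝ) : EReal) * eLog2 x := by
  have hn' : (0:ℝ) < n := by exact_mod_cast hn
  have hneg : (-1 : ℝ) / n < 0 := div_neg_of_neg_of_pos (by norm_num) hn'
  unfold eLog2
  have hxt : x ≠ ⊤ := fun h0 => by rw [h0] at h; exact absurd h (by simp)
  rw [if_neg hxt]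
  split_ifs with h0
  · rw [EReal.coe_mul_bot_of_neg hneg]; exact le_top
  · push Not at h0
    have hxb : x ≠ ⊥ := fun hb => by rw [hb] at h0; exact absurd h0 (by simp)
    lift x to ℝ using ⟨hxt, hxb⟩
    rw [EReal.coe_le_coe_iff] at h
    have h0' : 0 < x := by exact_mod_cast h0
    rw [EReal.toReal_coe, ← EReal.coe_mul, EReal.coe_le_coe_iff]
    have hl : Real.logb 2 x ≤ -(n * v) := by
      have := Real.logb_le_logb_of_le (b := 2) (by norm_num) h0' h
      rwa [Real.logb_rpow (by norm_num) (by norm_num)] at this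
    rw [div_mul_eq_mul_div, le_div_iff₀ hn']
    linarith

lemma erf_ge {X Y : Type*} [Fintype X] [Fintype Y] (W : X → Y → ℝ≥0∞) (α : ℝ≥0∞) (r : ℝ)
    (hr : 0 ≤ r) (v : EReal)
    (h : ∀ v' : ℝ, (v' : EReal) < v → ∀ᶠ n : ℕ in atTop,
      simD α (prodCh n W) (cseq r n) ≤ (((2:ℝ) ^ (-(n * v')) : ℝ) : EReal)) :
    v ≤ Erf α W r := by
  refine le_of_forall_lt fun c hc => ?_
  obtain ⟨v', h1, h2⟩ := EReal.lt_iff_exists_real_btwn.1 hc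
  refine lt_of_lt_of_le h1 ?_
  unfold Erf
  refine le_trans ?_ (le_iSup _ (⟨cseq r, rateOK_cseq r hr⟩ : {c : ℕ → ℝ // RateOK r c}))
  refine le_liminf_of_le ?_ ?_
  · isBoundedDefault
  · filter_upwards [h v' h2, eventually_gt_atTop 0] with n hn hn0
    exact neg_inv_mul_eLog2 hn0 hn

lemma simD_le {X Y : Type*} [Fintype X] [Fintype Y] {W N : X → Y → ℝ≥0∞} {α : ℝ≥0∞} {c : ℝ}
    {d : EReal} (hN : IsSimulation c N) (h : ∀ x, renyiD α (W x) (N x) ≤ d) : simD α W c ≤ d :=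
  iInf_le_of_le (⟨N, hN⟩ : {N : X → Y → ℝ≥0∞ // IsSimulation c N}) (iSup_le h)

lemma sim_const {X Y : Type*} [Fintype X] [Fintype Y] (Q : Y → ℝ≥0∞) (hQ : ∑ y, Q y = 1) (c : ℝ)
    (hc : 0 ≤ c) : IsSimulation c (fun (_ : X) y => Q y) := by
  refine ⟨1, 1, fun _ => 1, fun _ _ _ => 1, fun _ _ y => Q y, by norm_num, by simpa using hc,
    by simp, by simp, fun _ _ => hQ, by simp⟩

lemma sim_sum {X Y : Type*} [Fintype X] [Fintype Y] {N : X → Y → ℝ≥0∞} {c : ℝ}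
    (h : IsSimulation c N) (x : X) : ∑ y, N x y = 1 := by
  obtain ⟨m, M, PK, E, D, -, -, hPK, hE, hD, hN⟩ := h
  simp only [hN]
  rw [Finset.sum_comm]
  rw [← hPK]
  refine Finset.sum_congr rfl fun k _ => ?_
  rw [Finset.sum_comm]
  simp only [← Finset.mul_sum, hD, mul_one, hE]

lemma prodCh_channel {X Y : Type*} [Fintype X] [Fintype Y] {W : X → Y → ℝ≥0∞} (hW : IsChannel W)
    (n : ℕ) : IsChannel (prodCh n W) := by
  intro xs
  unfold prodCh
  rw [sum_pi_prod (fun i y => W (xs i) y)]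
  simp [hW _]

lemma prodDist_dist {Y : Type*} [Fintype Y] {Q : Y → ℝ≥0∞} (hQ : ∑ y, Q y = 1) (n : ℕ) :
    ∑ ys : Fin n → Y, prodDist n Q ys = 1 := by
  unfold prodDist
  rw [sum_pi_prod (fun _ y => Q y)]
  simp [hQ]

/-- Part A: the reliability function is nonnegative. -/
lemma erf_nonneg {X Y : Type*} [Fintype X] [Fintype Y] [Nonempty Y] (W : X → Y → ℝ≥0∞)
    (hW : IsChannel W) (α : ℝ≥0∞) (hα : α ≠ 0) (r : ℝ) (hr : 0 ≤ r) : 0 ≤ Erf α W r := by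
  refine erf_ge W α r hr 0 fun v' hv' => ?_
  have hv : v' < 0 := by exact_mod_cast hv'
  set k : ℝ := ((Fintype.card Y : ℕ) : ℝ) with hk
  have hk1 : 1 ≤ k := by rw [hk]; exact_mod_cast Fintype.card_pos
  have hk0 : 0 < k := by linarith
  have hD : ∀ n, simD α (prodCh n W) (cseq r n) ≤ ((n * Real.logb 2 k : ℝ) : EReal) := by
    intro n
    have hQ : ∑ _y : Y, ENNReal.ofReal k⁻¹ = 1 := by
      rw [Finset.sum_const, Finset.card_univ, nsmul_eq_mul, ENNReal.ofReal_inv_of_pos hk0, hk,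
        ENNReal.ofReal_natCast, ENNReal.mul_inv_cancel (by simp) (by simp)]
    refine simD_le (sim_const _ (prodDist_dist hQ n) _ (cseq_nonneg r n)) fun xs => ?_
    have h1 := div_scale (prodCh n W xs) (prodDist n fun _ => ENNReal.ofReal k⁻¹)
      (prodCh_channel hW n xs) ((k⁻¹) ^ n) (by positivity) (fun ys => by
        have : prodCh n W xs ys ≤ 1 := dist_le_one (prodCh_channel hW n xs) ys
        calc _ ≤ ENNReal.ofReal ((k⁻¹) ^ n) * 1 := by gcongr
          _ = _ := by rw [ENNReal.ofReal_pow (inv_pos.2 hk0).le]; simp [prodDist]) α hα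
    refine le_trans h1 (le_of_eq ?_)
    rw [← inv_pow, inv_inv, Real.logb_pow]
  have hb : 1 < (2:ℝ) ^ (-v') := Real.one_lt_rpow (by norm_num) (by linarith)
  have hT := (tendsto_pow_const_div_const_pow_of_one_lt 1 hb).mul_const (Real.logb 2 k)
  rw [zero_mul] at hT
  filter_upwards [hT.eventually (eventually_le_nhds zero_lt_one)] with n hn
  refine le_trans (hD n) ?_
  rw [EReal.coe_le_coe_iff]
  have hpos : 0 < ((2:ℝ) ^ (-v')) ^ n := by positivity
  rw [pow_one, div_mul_eq_mul_div, div_le_one hpos] at hn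
  refine le_trans hn (le_of_eq ?_)
  rw [← Real.rpow_natCast, ← Real.rpow_mul (by norm_num)]
  congr 1; ring

lemma scheme {X Y : Type*} [Fintype X] [Fintype Y] (W : X → Y → ℝ≥0∞) (hW : IsChannel W)
    (Q : Y → ℝ≥0∞) (hQ : ∑ y, Q y = 1) (r : ℝ) (hr : 0 ≤ r) (n : ℕ) :
    ∃ N, IsSimulation (cseq r n) N ∧ ∃ ε : ℝ, 0 < ε ∧ ε ≤ 1 / 2 ∧ ε ≤ Real.exp (-(n:ℝ) ^ 2) ∧
      ∀ xs ys, ENNReal.ofReal (1 - ε) *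
        min (prodCh n W xs ys) (ENNReal.ofReal ((2:ℝ) ^ (n * r)) * prodDist n Q ys) ≤ N xs ys := by
  have hlam : (1:ℝ) ≤ (2:ℝ) ^ (n * r) := Real.one_le_rpow (by norm_num) (by positivity)
  obtain ⟨N, h1, h2⟩ := rejection (prodDist n Q) (prodDist_dist hQ n) (prodCh n W)
    (prodCh_channel hW n) ((2:ℝ) ^ (n * r)) hlam (Mseq r n) (Mseq_pos r n) (cseq r n) le_rfl
  have hM : (n:ℝ) ^ 2 + 1 ≤ Mseq r n / (2:ℝ) ^ (n * r) := by
    rw [le_div_iff₀ (by linarith)]; exact Mseq_ge r n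
  refine ⟨N, h1, _, Real.exp_pos _, ?_, ?_, h2⟩
  · have h3 : Real.exp (-(Mseq r n / (2:ℝ) ^ (n * r))) ≤ Real.exp (-1) := by
      apply Real.exp_le_exp.2; nlinarith [sq_nonneg (n:ℝ)]
    have h4 : Real.exp (-1) ≤ 1 / 2 := by
      rw [Real.exp_neg, one_div]
      apply inv_anti₀ (by norm_num)
      have := Real.add_one_le_exp (1:ℝ)
      linarith
    linarith
  · apply Real.exp_le_exp.2; linarith

lemma exp_le_two_rpow {x : ℝ} (hx : 0 ≤ x) : Real.exp (-x) ≤ (2:ℝ) ^ (-x) := by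
  rw [Real.rpow_def_of_pos (by norm_num)]
  apply Real.exp_le_exp.2
  have := Real.log_two_lt_d9
  nlinarith

/-- Part C. -/
lemma erf_top {X Y : Type*} [Fintype X] [Fintype Y] [Nonempty X] (W : X → Y → ℝ≥0∞)
    (hW : IsChannel W) (α : ℝ≥0∞) (hα : α ≠ 0) (r : ℝ) (hr : renyiCap ⊤ W ≤ (r : EReal)) :
    Erf α W r = ⊤ := by
  obtain ⟨Q, hQ, I, hI0, hI, hWQ⟩ := cap_top W hW
  have hIr : I ≤ r := by exact_mod_cast hI.trans hr
  have hr0 : 0 ≤ r := hI0.trans hIr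
  rw [← top_le_iff]
  refine erf_ge W α r hr0 ⊤ fun v' _ => ?_
  filter_upwards [eventually_ge_atTop 2, eventually_ge_atTop ⌈v' + 1⌉₊] with n hn2 hnv
  have hn2' : (2:ℝ) ≤ n := by exact_mod_cast hn2
  have hnv' : v' + 1 ≤ n := Nat.ceil_le.1 hnv
  obtain ⟨N, hN, ε, h0, h1, h2, h3⟩ := scheme W hW Q hQ r hr0 n
  refine simD_le hN fun xs => ?_
  have hκ : 0 < 1 - ε := by linarith
  refine le_trans (div_scale (prodCh n W xs) (N xs) (prodCh_channel hW n xs) (1 - ε) hκ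
    (fun ys => ?_) α hα) ?_
  · refine le_trans (le_of_eq ?_) (h3 xs ys)
    congr 1
    rw [min_eq_left]
    calc prodCh n W xs ys ≤ ∏ i, (ENNReal.ofReal ((2:ℝ) ^ I) * Q (ys i)) :=
          Finset.prod_le_prod' fun i _ => hWQ _ _
      _ = ENNReal.ofReal (((2:ℝ) ^ I) ^ n) * prodDist n Q ys := by
          rw [Finset.prod_mul_distrib, Finset.prod_const, Finset.card_univ, Fintype.card_fin,
            ENNReal.ofReal_pow (by positivity)]
          rfl
      _ ≤ _ := by
          gcongr
          rw [← Real.rpow_natCast, ← Real.rpow_mul (by norm_num)]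
          apply Real.rpow_le_rpow_of_exponent_le (by norm_num)
          nlinarith
  · rw [EReal.coe_le_coe_iff]
    have hinv : (1 - ε)⁻¹ ≤ 1 + 2 * ε := by
      rw [inv_le_iff_one_le_mul₀ hκ]; nlinarith
    have hl2 := Real.log_two_gt_d9
    calc Real.logb 2 (1 - ε)⁻¹ ≤ Real.logb 2 (1 + 2 * ε) :=
          Real.logb_le_logb_of_le (by norm_num) (inv_pos.2 hκ) hinv
      _ ≤ 2 * ε / Real.log 2 := logb_one_add_le (by linarith)
      _ ≤ 4 * ε := by rw [div_le_iff₀ (by linarith)]; nlinarith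
      _ ≤ (2:ℝ) ^ (2:ℝ) * (2:ℝ) ^ (-(n:ℝ) ^ 2) := by
          have := exp_le_two_rpow (sq_nonneg (n:ℝ))
          norm_num
          linarith
      _ = (2:ℝ) ^ ((2:ℝ) + -(n:ℝ) ^ 2) := by rw [Real.rpow_add (by norm_num)]
      _ ≤ _ := by
          apply Real.rpow_le_rpow_of_exponent_le (by norm_num)
          nlinarith

/-- Moment bound for the `n`-fold scheme. -/
lemma scheme_moment {X Y : Type*} [Fintype X] [Fintype Y] (W : X → Y → ℝ≥0∞) (hW : IsChannel W)
    (Q : Y → ℝ≥0∞) (hQ : ∑ y, Q y = 1) (r : ℝ) (hr : 0 ≤ r) (t : ℝ) (I : ℝ)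
    (hWQ : ∀ x, ∑ y, W x y ^ (1 + t) * Q y ^ (-t) ≤ ENNReal.ofReal ((2:ℝ) ^ (t * I)))
    (hv : 0 ≤ t * (r - I)) (s : ℝ) (hs : 0 < s) (hst : s ≤ t)
    (n : ℕ) (hn : t * (r - I) ≤ n) :
    ∃ N, IsSimulation (cseq r n) N ∧ ∀ xs,
      ∑ ys, prodCh n W xs ys ^ (1 + s) * N xs ys ^ (-s) ≤
        ENNReal.ofReal (1 + (1 + 4 * s * Real.exp (2 * s)) * (2:ℝ) ^ (-(n * (t * (r - I))))) := by
  obtain ⟨N, hN, ε, h0, h1, h2, h3⟩ := scheme W hW Q hQ r hr n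
  refine ⟨N, hN, fun xs => ?_⟩
  have ht : 0 < t := lt_of_lt_of_le hs hst
  have hκ : 0 < 1 - ε := by linarith
  have hlam : (0:ℝ) < (2:ℝ) ^ (n * r) := by positivity
  have hQt := dist_ne_top hQ
  have hmb := moment_bound (prodCh n W xs) (N xs) (prodDist n Q) (prodCh_channel hW n xs)
    (dist_ne_top (prodDist_dist hQ n)) (ENNReal.ofReal (1 - ε)) (ENNReal.ofReal ((2:ℝ) ^ (n * r)))
    ENNReal.ofReal_ne_top ENNReal.ofReal_ne_top (h3 xs) s t hs hst
  refine le_trans hmb ?_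
  set v := t * (r - I) with hvdef
  set δ := (2:ℝ) ^ (-(n * v)) with hδ
  have hδ0 : 0 < δ := by positivity
  have hδ1 : δ ≤ 1 := Real.rpow_le_one_of_one_le_of_nonpos (by norm_num)
    (by have : 0 ≤ (n:ℝ) * v := by positivity
        linarith)
  have hprod : ∑ ys, prodCh n W xs ys ^ (1 + t) * prodDist n Q ys ^ (-t) ≤
      ENNReal.ofReal ((2:ℝ) ^ (n * (t * I))) := by
    have e : ∀ ys : Fin n → Y, prodCh n W xs ys ^ (1 + t) * prodDist n Q ys ^ (-t) =
        ∏ i, (W (xs i) (ys i) ^ (1 + t) * Q (ys i) ^ (-t)) := by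
      intro ys
      unfold prodCh prodDist
      rw [Finset.prod_mul_distrib,
        ENNReal.prod_rpow_of_ne_top (fun i _ => dist_ne_top (hW (xs i)) (ys i)),
        ENNReal.prod_rpow_of_ne_top (fun i _ => hQt (ys i))]
    simp only [e]
    rw [sum_pi_prod (fun i y => W (xs i) y ^ (1 + t) * Q y ^ (-t))]
    calc _ ≤ ∏ _i : Fin n, ENNReal.ofReal ((2:ℝ) ^ (t * I)) :=
          Finset.prod_le_prod' fun i _ => hWQ (xs i)
      _ = _ := by
          rw [Finset.prod_const, Finset.card_univ, Fintype.card_fin,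
            ← ENNReal.ofReal_pow (by positivity), ← Real.rpow_natCast,
            ← Real.rpow_mul (by norm_num)]
          congr 2; ring
  have hεδ : ε ≤ δ := by
    refine h2.trans ((exp_le_two_rpow (sq_nonneg (n:ℝ))).trans ?_)
    apply Real.rpow_le_rpow_of_exponent_le (by norm_num)
    have : (0:ℝ) ≤ n := by positivity
    nlinarith
  have hκs : (1 - ε) ^ (-s) ≤ 1 + 2 * s * Real.exp (2 * s) * ε := by
    have hinv : (1 - ε)⁻¹ ≤ Real.exp (2 * ε) := by
      have h5 : (1 - ε)⁻¹ ≤ 1 + 2 * ε := by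
        rw [inv_le_iff_one_le_mul₀ hκ]; nlinarith
      have := Real.add_one_le_exp (2 * ε)
      linarith
    have h6 : (1 - ε) ^ (-s) ≤ Real.exp (2 * s * ε) := by
      rw [Real.rpow_neg hκ.le, ← Real.inv_rpow hκ.le]
      calc _ ≤ Real.exp (2 * ε) ^ s := by gcongr
        _ = _ := by rw [← Real.exp_mul]; congr 1; ring
    have h7 : Real.exp (2 * s * ε) ≤ 1 + 2 * s * ε * Real.exp (2 * s * ε) := by
      have h8 := Real.one_sub_le_exp_neg (2 * s * ε)
      rw [Real.exp_neg] at h8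
      have h9 := Real.exp_pos (2 * s * ε)
      have h10 := mul_le_mul_of_nonneg_right h8 h9.le
      rw [inv_mul_cancel₀ h9.ne'] at h10
      linarith
    have h11 : Real.exp (2 * s * ε) ≤ Real.exp (2 * s) := by
      apply Real.exp_le_exp.2; nlinarith
    calc _ ≤ 1 + 2 * s * ε * Real.exp (2 * s * ε) := h6.trans h7
      _ ≤ 1 + 2 * s * ε * Real.exp (2 * s) := by gcongr
      _ = _ := by ring
  calc _ ≤ ENNReal.ofReal (1 - ε) ^ (-s) * (1 + ENNReal.ofReal ((2:ℝ) ^ (n * r)) ^ (-t) *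
        ENNReal.ofReal ((2:ℝ) ^ (n * (t * I)))) := by gcongr
    _ = ENNReal.ofReal ((1 - ε) ^ (-s) * (1 + δ)) := by
        rw [ENNReal.ofReal_rpow_of_pos hκ, ENNReal.ofReal_rpow_of_pos hlam,
          ← ENNReal.ofReal_mul (by positivity), ← Real.rpow_mul (by norm_num),
          ← Real.rpow_add (by norm_num), ← ENNReal.ofReal_one,
          ← ENNReal.ofReal_add (by norm_num) (by positivity), ← ENNReal.ofReal_mul (by positivity)]
        congr 4
        rw [hvdef]; ring
    _ ≤ _ := by
        apply ENNReal.ofReal_le_ofReal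
        set C := 2 * s * Real.exp (2 * s) with hC
        have hC0 : 0 ≤ C := by positivity
        calc _ ≤ (1 + C * ε) * (1 + δ) := by gcongr
          _ ≤ (1 + C * δ) * (1 + δ) := by gcongr
          _ ≤ 1 + (1 + 2 * C) * δ := by nlinarith [mul_nonneg hC0 hδ0.le]
          _ = _ := by rw [hC]; ring

lemma erf_ge_of_bound {X Y : Type*} [Fintype X] [Fintype Y] (W : X → Y → ℝ≥0∞) (α : ℝ≥0∞) (r : ℝ)
    (hr : 0 ≤ r) (v K : ℝ)
    (h : ∀ n : ℕ, v ≤ n → simD α (prodCh n W) (cseq r n) ≤ ((K * (2:ℝ) ^ (-(n * v)) : ℝ) : EReal)) :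
    (v : EReal) ≤ Erf α W r := by
  refine erf_ge W α r hr v fun v' hv' => ?_
  have hlt : v' < v := by exact_mod_cast hv'
  have hb : 1 < (2:ℝ) ^ (v - v') := Real.one_lt_rpow (by norm_num) (by linarith)
  filter_upwards [eventually_ge_atTop ⌈v⌉₊, (tendsto_pow_atTop_atTop_of_one_lt hb).eventually_ge_atTop K]
    with n hn hK
  refine (h n (Nat.ceil_le.1 hn)).trans ?_
  rw [EReal.coe_le_coe_iff]
  calc _ ≤ ((2:ℝ) ^ (v - v')) ^ n * (2:ℝ) ^ (-(n * v)) := by gcongr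
    _ = _ := by
      rw [← Real.rpow_natCast, ← Real.rpow_mul (by norm_num), ← Real.rpow_add (by norm_num)]
      congr 1; ring

lemma erf_main {X Y : Type*} [Fintype X] [Fintype Y] [Nonempty X] [Nonempty Y] (W : X → Y → ℝ≥0∞)
    (hW : IsChannel W) (r : ℝ) (hr : 0 ≤ r) (t : ℝ) (ht : 0 < t) (α : ℝ≥0∞)
    (hα : (∃ s, 0 < s ∧ s ≤ t ∧ α = 1 + ENNReal.ofReal s) ∨ α = 1 ∨
      ∃ a, 0 < a ∧ a < 1 ∧ α = ENNReal.ofReal a) :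
    ((ENNReal.ofReal t : ℝ≥0∞) : EReal) * ((r : EReal) - renyiCap (1 + ENNReal.ofReal t) W) ≤
      Erf α W r := by
  obtain ⟨Q, hQ, I, hI, hWQ⟩ := cap_finite W hW t ht
  have hα0 : α ≠ 0 := by
    rcases hα with ⟨s, hs, -, rfl⟩ | rfl | ⟨a, ha, -, rfl⟩
    · simp
    · simp
    · simpa using ha
  have hle : ((ENNReal.ofReal t : ℝ≥0∞) : EReal) * ((r : EReal) - renyiCap (1 + ENNReal.ofReal t) W)
      ≤ ((t * (r - I) : ℝ) : EReal) := by
    have e : ((ENNReal.ofReal t : ℝ≥0∞) : EReal) = (t : EReal) := by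
      rw [EReal.coe_ennreal_ofReal, max_eq_left ht.le]
    rw [e, EReal.coe_mul, EReal.coe_sub]
    refine mul_le_mul_of_nonneg_left ?_ (by exact_mod_cast ht.le)
    exact EReal.sub_le_sub le_rfl hI
  refine hle.trans ?_
  rcases lt_or_ge (t * (r - I)) 0 with hneg | hpos
  · refine le_trans ?_ (erf_nonneg W hW α hα0 r hr)
    exact_mod_cast hneg.le
  have key : ∀ s : ℝ, 0 < s → s ≤ t → (∀ n : ℕ, ∀ N : (Fin n → X) → (Fin n → Y) → ℝ≥0∞,
      IsSimulation (cseq r n) N → ∀ xs, ∀ η : ℝ, 0 ≤ η →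
      ∑ ys, prodCh n W xs ys ^ (1 + s) * N xs ys ^ (-s) ≤ ENNReal.ofReal (1 + η) →
      renyiD α (prodCh n W xs) (N xs) ≤ ((η / (s * Real.log 2) : ℝ) : EReal)) →
      ((t * (r - I) : ℝ) : EReal) ≤ Erf α W r := by
    intro s hs hst hdiv
    refine erf_ge_of_bound W α r hr _ ((1 + 4 * s * Real.exp (2 * s)) / (s * Real.log 2))
      fun n hn => ?_
    obtain ⟨N, hN, hb⟩ := scheme_moment W hW Q hQ r hr t I hWQ hpos s hs hst n hn
    refine simD_le hN fun xs => ?_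
    refine (hdiv n N hN xs _ (by positivity) (hb xs)).trans (le_of_eq ?_)
    congr 1; ring
  rcases hα with ⟨s, hs, hst, rfl⟩ | rfl | ⟨a, ha, ha1, rfl⟩
  · exact key s hs hst fun n N hN xs η hη h => div_eta_gt _ _ s hs η hη h
  · exact key t ht le_rfl fun n N hN xs η hη h => div_eta_one _ _ (prodCh_channel hW n xs)
      (dist_ne_top (sim_sum hN xs)) t ht η hη h
  · exact key t ht le_rfl fun n N hN xs η hη h => div_eta_lt _ _ (prodCh_channel hW n xs)
      (dist_ne_top (sim_sum hN xs)) t ht η hη h a ha ha1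
theorem reliability_function_achievability
    {X Y : Type*} [Fintype X] [Fintype Y] [Nonempty X] [Nonempty Y]
    (W : X → Y → ℝ≥0∞) (hW : IsChannel W) :
    (∀ r : ℝ, 0 ≤ r → (r : EReal) < renyiCap ⊤ W →
      (∀ s : ℝ, -1 < s → s ≤ 0 →
        (⨆ t : ℝ≥0∞, (t : EReal) * ((r : EReal) - renyiCap (1 + t) W)) ≤
          Erf (ENNReal.ofReal (1 + s)) W r) ∧
      (∀ s : ℝ≥0∞, 0 < s →
        max (⨆ t : {t : ℝ≥0∞ // s ≤ t},
            (t.1 : EReal) * ((r : EReal) - renyiCap (1 + t.1) W)) 0 ≤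
          Erf (1 + s) W r)) ∧
    (∀ r : ℝ, renyiCap ⊤ W ≤ (r : EReal) → ∀ s : ℝ≥0∞, 0 < s →
      Erf (1 + s) W r = ⊤) := by
  refine ⟨fun r hr hlt => ⟨fun s hs hs0 => iSup_le fun t => ?_, fun s hs => max_le (iSup_le fun t => ?_)
    (erf_nonneg W hW _ (by simp) r hr)⟩, fun r hr s _ => erf_top W hW _ (by simp) r hr⟩
  · by_cases ht : t = ⊤
    · rw [ht, EReal.coe_ennreal_top, add_top, EReal.top_mul_of_neg ((EReal.sub_neg (Or.inl (EReal.coe_ne_top r)) (Or.inl (EReal.coe_ne_bot r))).2 hlt)]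
      exact bot_le
    by_cases ht0 : t = 0
    · rw [ht0, EReal.coe_ennreal_zero, zero_mul]
      exact erf_nonneg W hW _ (by simp; linarith) r hr
    have htr : 0 < t.toReal := ENNReal.toReal_pos ht0 ht
    rw [← ENNReal.ofReal_toReal ht]
    apply erf_main W hW r hr _ htr
    rcases hs0.eq_or_lt with h | h
    · right; left; simp [h]
    · right; right; exact ⟨1 + s, by linarith, by linarith, rfl⟩
  · obtain ⟨t, hst⟩ := t
    show (t : EReal) * ((r : EReal) - renyiCap (1 + t) W) ≤ _
    by_cases ht : t = ⊤
    · rw [ht, EReal.coe_ennreal_top, add_top, EReal.top_mul_of_neg ((EReal.sub_neg (Or.inl (EReal.coe_ne_top r)) (Or.inl (EReal.coe_ne_bot r))).2 hlt)]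
      exact bot_le
    have hs' : s ≠ ⊤ := ne_top_of_le_ne_top ht hst
    have hsr : 0 < s.toReal := ENNReal.toReal_pos hs.ne' hs'
    have hstr : s.toReal ≤ t.toReal := ENNReal.toReal_mono ht hst
    rw [← ENNReal.ofReal_toReal ht]
    apply erf_main W hW r hr _ (by linarith)
    left
    exact ⟨s.toReal, hsr, hstr, by rw [ENNReal.ofReal_toReal hs']⟩

end RST
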